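/- arXiv:2209.04664 — 2 statements merged into one kernel-verified Lean document; each statement's English description precedes it below -/
import Mathlib

section
/- Let S be a real symmetric d×d matrix of full rank with exactly m positive eigenvalues, ν a Borel probability measure on ℝ^d with finite second moment, γ ∈ Γ(ν), and G a maximal S-monotone set. Then the following are equivalent: (i) γ is an optimal plan for the primal problem and G is an optimal set for the dual problem; (ii) for every (x,y) in the support of γ, x ∈ P_G(y), i.e. x belongs to the set of minimizers over G of z ↦ S(z−y,z−y). -/
/-!
The proof rests on a weak duality inequality with its equality case, and on a strong duality
statement obtained from a perturbation of optimal plans. Throughout,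
`aff S z y = S(z,y) - S(z,z)/2`, so that `ψ_G(y)` is the supremum of `aff S z y` over `z ∈ G`, and
`x ∈ P_G(y)` means that `x ∈ G` attains this supremum.

*Weak duality.* Let `γ ∈ Γ(ν)` and let `G` be maximal `S`-monotone. If `Z(x)` is a measurable
selection with values in `G`, the martingale property gives
`∫ ψ_G dν ≥ ∫ aff S (Z x) y dγ = ∫ aff S (Z x) x dγ`. Choosing `Z` close to optimal in `ψ_G(x)`
gives `∫ ψ_G dν ≥ ∫ ψ_G(x) dγ`, and maximality of `G` gives `ψ_G(x) ≥ S(x,x)/2`, with equality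
exactly on `G`. The right-hand side is thus at least `∫ S(x,x)/2 dγ`, the primal value of `γ`;
in the case of equality `x ∈ G` almost surely, and then `x ∈ P_G(y)` almost surely
(`MaxSMono.weak_duality`, `MGamma.mem_SProj_of_eInt_le`).

*Strong duality.* Let `γ` be optimal and let `ρ` be a probability measure with bounded density with
respect to `γ`. Sending the mass `ε ρ` to a single atom, and restoring the martingale property of
the rest by a conditional expectation, changes the value by
`ε (S(ȳ,ȳ)/2 - ∫ aff S x y dρ) + O(ε²)`, where `ȳ` is the mean of `y` under `ρ`. Hence the bracket
is nonpositive (`PrimalOpt.le_integral_aff`), which says that the convex set of all pairs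
`(ȳ, ∫ aff S x y dρ)` lies in the epigraph of `x ↦ S(x,x)/2`. By Zorn's lemma it extends to a
maximal convex subset `C` of this epigraph. The contact set `M = {w | (w, S(w,w)/2) ∈ C}` is
`S`-monotone, and it is maximal by a Hahn-Banach argument of the type of Minty's theorem
(`MaxConv.minty`). Moreover `C` lies above every `aff S w` with `w ∈ M`; localizing `ρ` near a
support point `(x,y)` of `γ` gives `ψ_M(y) ≤ aff S x y` (`PrimalOpt.exists_dual`). So the dual
value of `M` is at most the primal value of `γ`, and any dual optimal `G` attains equality in weak
duality. As the graph of `P_G` is closed, it contains the support of `γ`.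
-/

open MeasureTheory Filter Set Matrix

noncomputable section

/-- The bilinear form of the matrix `S`: `S(x,y) = ⟨x, Sy⟩`. -/
def Sb {d : ℕ} (S : Matrix (Fin d) (Fin d) ℝ) (x y : Fin d → ℝ) : ℝ :=
  x ⬝ᵥ S.mulVec y

/-- A set `G` is `S`-monotone if `S(x-y,x-y) ≥ 0` for all `x, y ∈ G`. -/
def SMono {d : ℕ} (S : Matrix (Fin d) (Fin d) ℝ) (G : Set (Fin d → ℝ)) : Prop :=
  ∀ x ∈ G, ∀ y ∈ G, 0 ≤ Sb S (x - y) (x - y)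

/-- Maximal `S`-monotone set. -/
def MaxSMono {d : ℕ} (S : Matrix (Fin d) (Fin d) ℝ) (G : Set (Fin d → ℝ)) : Prop :=
  SMono S G ∧ ∀ H, SMono S H → G ⊆ H → H = G

/-- The Fitzpatrick function `ψ_G(y) = sup_{x∈G} (S(x,y) - S(x,x)/2)`, with values in
`ℝ ∪ {+∞}` (modeled in `EReal`). -/
def fitz {d : ℕ} (S : Matrix (Fin d) (Fin d) ℝ) (G : Set (Fin d → ℝ))
    (y : Fin d → ℝ) : EReal :=
  ⨆ x ∈ G, ((Sb S x y - Sb S x x / 2 : ℝ) : EReal)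

/-- Positive part of an extended real number, in `ℝ≥0∞`. -/
def epos (x : EReal) : ENNReal := if x = ⊤ then ⊤ else ENNReal.ofReal x.toReal

/-- Integral of an `EReal`-valued function: positive part minus negative part. -/
def eInt {α : Type*} [MeasurableSpace α] (μ : Measure α) (f : α → EReal) : EReal :=
  ((∫⁻ a, epos (f a) ∂μ : ENNReal) : EReal) - ((∫⁻ a, epos (-(f a)) ∂μ : ENNReal) : EReal)

/-- The martingale property of a measure `γ(dx,dy)` on `ℝ^d × ℝ^d`: the conditional
expectation of `y` given `x` equals `x`, `γ`-a.s. -/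
def MartProp {d : ℕ} (γ : Measure ((Fin d → ℝ) × (Fin d → ℝ))) : Prop :=
  γ[(fun p => p.2) | MeasurableSpace.comap Prod.fst inferInstance] =ᵐ[γ] fun p => p.1

/-- `γ ∈ Γ(ν)`: probability measures on `ℝ^d × ℝ^d` with finite second moment,
`y`-marginal `ν` and the martingale property. -/
def MGamma {d : ℕ} (ν : Measure (Fin d → ℝ))
    (γ : Measure ((Fin d → ℝ) × (Fin d → ℝ))) : Prop :=
  IsProbabilityMeasure γ ∧ γ.map Prod.snd = ν ∧
    Integrable (fun p => ‖p.1‖ ^ 2 + ‖p.2‖ ^ 2) γ ∧ MartProp γ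

/-- Value of the primal problem: `(1/2) ∫ S(x,y) dγ`. -/
def primalVal {d : ℕ} (S : Matrix (Fin d) (Fin d) ℝ)
    (γ : Measure ((Fin d → ℝ) × (Fin d → ℝ))) : ℝ :=
  (1 / 2) * ∫ p, Sb S p.1 p.2 ∂γ

/-- `γ` is an optimal plan for the primal problem. -/
def PrimalOpt {d : ℕ} (S : Matrix (Fin d) (Fin d) ℝ) (ν : Measure (Fin d → ℝ))
    (γ : Measure ((Fin d → ℝ) × (Fin d → ℝ))) : Prop :=
  MGamma ν γ ∧ ∀ γ', MGamma ν γ' → primalVal S γ' ≤ primalVal S γ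

/-- `G` is an optimal set for the dual problem: minimize `∫ ψ_G dν` over maximal
`S`-monotone sets. -/
def DualOpt {d : ℕ} (S : Matrix (Fin d) (Fin d) ℝ) (ν : Measure (Fin d → ℝ))
    (G : Set (Fin d → ℝ)) : Prop :=
  MaxSMono S G ∧ ∀ H, MaxSMono S H → eInt ν (fitz S G) ≤ eInt ν (fitz S H)

/-- The support of a measure: points all of whose neighborhoods have positive measure. -/
def msupp {α : Type*} [TopologicalSpace α] [MeasurableSpace α] (μ : Measure α) : Set α :=
  {x | ∀ U ∈ nhds x, μ U ≠ 0}

/-- The `S`-projection on `G`: minimizers over `G` of `z ↦ S(z-y,z-y)`. -/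
def SProj {d : ℕ} (S : Matrix (Fin d) (Fin d) ℝ) (G : Set (Fin d → ℝ))
    (y : Fin d → ℝ) : Set (Fin d → ℝ) :=
  {x ∈ G | ∀ z ∈ G, Sb S (x - y) (x - y) ≤ Sb S (z - y) (z - y)}

/-- The inverse image of the projection: `P_G^{-1}(x) = {y : x ∈ P_G(y)}`. -/
def SProjInv {d : ℕ} (S : Matrix (Fin d) (Fin d) ℝ) (G : Set (Fin d → ℝ))
    (x : Fin d → ℝ) : Set (Fin d → ℝ) :=
  {y | x ∈ SProj S G y}

/-- `Q_G(x) = ∪_{n ≥ 1} Q_G^{1/n}(x)`, where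
`Q_G^ε(x) = {y ∈ P_G^{-1}(x) : x + ε (x - y) ∈ P_G^{-1}(x)}`. -/
def QG {d : ℕ} (S : Matrix (Fin d) (Fin d) ℝ) (G : Set (Fin d → ℝ))
    (x : Fin d → ℝ) : Set (Fin d → ℝ) :=
  ⋃ n : ℕ, {y ∈ SProjInv S G x |
    x + ((1 : ℝ) / (n + 1)) • (x - y) ∈ SProjInv S G x}

/-! ### Algebra of the form and of maximal monotone sets -/

section Algebra

variable {d : ℕ} {S : Matrix (Fin d) (Fin d) ℝ}

lemma Sb_add_left (x y z : Fin d → ℝ) : Sb S (x + y) z = Sb S x z + Sb S y z := by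
  simp [Sb]

lemma Sb_add_right (x y z : Fin d → ℝ) : Sb S x (y + z) = Sb S x y + Sb S x z := by
  simp [Sb, Matrix.mulVec_add]

lemma Sb_smul_left (t : ℝ) (x y : Fin d → ℝ) : Sb S (t • x) y = t * Sb S x y := by
  simp [Sb]

lemma Sb_smul_right (t : ℝ) (x y : Fin d → ℝ) : Sb S x (t • y) = t * Sb S x y := by
  simp [Sb, Matrix.mulVec_smul]

lemma Sb_sub_left (x y z : Fin d → ℝ) : Sb S (x - y) z = Sb S x z - Sb S y z := by
  simp [Sb]

lemma Sb_sub_right (x y z : Fin d → ℝ) : Sb S x (y - z) = Sb S x y - Sb S x z := by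
  simp [Sb, Matrix.mulVec_sub]

lemma Sb_neg_right (x y : Fin d → ℝ) : Sb S x (-y) = -Sb S x y := by
  simp [Sb, Matrix.mulVec_neg]

lemma Sb_neg_left (x y : Fin d → ℝ) : Sb S (-x) y = -Sb S x y := by
  simp [Sb]

lemma Sb_comm (hS : S.IsHermitian) (x y : Fin d → ℝ) : Sb S x y = Sb S y x := by
  unfold Sb
  have : Sᵀ = S := by simpa [Matrix.IsHermitian] using hS
  rw [Matrix.dotProduct_mulVec, dotProduct_comm, ← Matrix.mulVec_transpose, this]

variable (S) in
/-- The form `S(x,y)` as a continuous bilinear map. -/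
def SbL : (Fin d → ℝ) →L[ℝ] (Fin d → ℝ) →L[ℝ] ℝ :=
  LinearMap.toContinuousBilinearMap
    (LinearMap.mk₂ ℝ (Sb S) Sb_add_left Sb_smul_left Sb_add_right Sb_smul_right)

@[simp] lemma SbL_apply (x y : Fin d → ℝ) : SbL S x y = Sb S x y := rfl

lemma continuous_Sb : Continuous fun p : (Fin d → ℝ) × (Fin d → ℝ) => Sb S p.1 p.2 :=
  (SbL S).continuous₂

@[fun_prop]
lemma Continuous.Sb {α : Type*} [TopologicalSpace α] {f g : α → Fin d → ℝ}
    (hf : Continuous f) (hg : Continuous g) : Continuous fun a => Sb S (f a) (g a) :=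
  continuous_Sb.comp (hf.prodMk hg)

variable (S) in
/-- The affine minorant `c(z,y) = S(z,y) - S(z,z)/2` of the Fitzpatrick functions of sets
containing `z`. -/
def aff (z y : Fin d → ℝ) : ℝ := Sb S z y - Sb S z z / 2

@[fun_prop]
lemma Continuous.aff {α : Type*} [TopologicalSpace α] {f g : α → Fin d → ℝ}
    (hf : Continuous f) (hg : Continuous g) : Continuous fun a => aff S (f a) (g a) := by
  unfold _root_.aff; fun_prop

/-- The difference between `S(x,x)/2` and the affine minorant at `z` is `S(x-z,x-z)/2`. -/
lemma aff_eq (hS : S.IsHermitian) (z x : Fin d → ℝ) :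
    aff S z x = Sb S x x / 2 - Sb S (x - z) (x - z) / 2 := by
  simp only [aff, Sb_sub_left, Sb_sub_right, Sb_comm hS x z]; ring

lemma aff_le_aff_iff (hS : S.IsHermitian) (x y z : Fin d → ℝ) :
    aff S z y ≤ aff S x y ↔ Sb S (x - y) (x - y) ≤ Sb S (z - y) (z - y) := by
  have h (u : Fin d → ℝ) : Sb S (u - y) (u - y) = Sb S y y - 2 * aff S u y := by
    simp only [aff, Sb_sub_left, Sb_sub_right, Sb_comm hS u y]; ring
  rw [h, h]; constructor <;> intro <;> linarith

lemma mem_SProj_iff (hS : S.IsHermitian) {G : Set (Fin d → ℝ)} {x y : Fin d → ℝ} :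
    x ∈ SProj S G y ↔ x ∈ G ∧ ∀ z ∈ G, aff S z y ≤ aff S x y := by
  simp only [SProj, mem_sep_iff, aff_le_aff_iff hS]

/-- For a maximal `S`-monotone set, `ψ_G(x) ≤ S(x,x)/2` exactly on `G`. -/
lemma MaxSMono.mem_iff (hS : S.IsHermitian) {G : Set (Fin d → ℝ)} (hG : MaxSMono S G)
    (x : Fin d → ℝ) : x ∈ G ↔ ∀ z ∈ G, aff S z x ≤ Sb S x x / 2 := by
  refine ⟨fun hx z hz => ?_, fun h => ?_⟩
  · rw [aff_eq hS]; linarith [hG.1 x hx z hz]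
  · have key : ∀ z ∈ G, 0 ≤ Sb S (x - z) (x - z) := fun z hz => by
      have := h z hz; rw [aff_eq hS] at this; linarith
    have key' : ∀ z ∈ G, 0 ≤ Sb S (z - x) (z - x) := fun z hz => by
      have := key z hz
      rwa [← neg_sub z x, Sb_neg_left, Sb_neg_right, neg_neg] at this
    have := hG.2 (insert x G) ?_ (subset_insert _ _)
    · rw [← this]; exact mem_insert _ _
    · rintro a (rfl | ha) b (rfl | hb)
      · simp [Sb]
      · exact key b hb
      · exact key' a ha
      · exact hG.1 a ha b hb

lemma MaxSMono.nonempty {G : Set (Fin d → ℝ)} (hG : MaxSMono S G) : G.Nonempty := by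
  by_contra h
  rw [not_nonempty_iff_eq_empty] at h
  have := hG.2 {0} (by rintro a rfl b rfl; simp [Sb]) (by simp [h])
  rw [h] at this
  exact (singleton_ne_empty _) this

/-- The symmetric matrix `S` has an absolute value `P = |S|` and a sign `J = sgn S`. -/
lemma exists_abs_sign (hS : S.IsHermitian) (hrank : IsUnit S.det) :
    ∃ P J : Matrix (Fin d) (Fin d) ℝ,
      (∀ x, x ≠ 0 → 0 < Sb P x x) ∧ (∀ x, 0 ≤ Sb P x x + Sb S x x) ∧
      (∀ x, Sb S x (J.mulVec x) = Sb P x x) ∧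
      (∀ x, Sb P (J.mulVec x) (J.mulVec x) = Sb P x x) := by
  set U : Matrix (Fin d) (Fin d) ℝ :=
    (hS.eigenvectorUnitary : Matrix (Fin d) (Fin d) ℝ) with hU
  set e := hS.eigenvalues with he
  have hU1 : U * Uᵀ = 1 := by
    have := (Matrix.mem_unitaryGroup_iff (A := U)).1 hS.eigenvectorUnitary.2
    simpa [Matrix.star_eq_conjTranspose] using this
  have hU2 : Uᵀ * U = 1 := by
    have := (Matrix.mem_unitaryGroup_iff' (A := U)).1 hS.eigenvectorUnitary.2
    simpa [Matrix.star_eq_conjTranspose] using this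
  have hSd : S = U * diagonal e * Uᵀ := by
    have := hS.spectral_theorem
    simpa [Unitary.conjStarAlgAut_apply, Matrix.star_eq_conjTranspose] using this
  have he0 : ∀ i, e i ≠ 0 := by
    intro i hi
    have h := hS.det_eq_prod_eigenvalues
    rw [h] at hrank
    refine hrank.ne_zero (Finset.prod_eq_zero (Finset.mem_univ i) ?_)
    simpa using hi
  -- quadratic forms in eigenvector coordinates
  have form (f : Fin d → ℝ) (x y : Fin d → ℝ) :
      Sb (U * diagonal f * Uᵀ) x y = ∑ i, f i * ((Uᵀ *ᵥ x) i * (Uᵀ *ᵥ y) i) := by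
    unfold Sb
    rw [← Matrix.mulVec_mulVec, ← Matrix.mulVec_mulVec, Matrix.dotProduct_mulVec,
      ← Matrix.mulVec_transpose, dotProduct]
    refine Finset.sum_congr rfl fun i _ => ?_
    rw [Matrix.mulVec_diagonal]; ring
  have hJ (x : Fin d → ℝ) (i : Fin d) :
      (Uᵀ *ᵥ ((U * diagonal (fun i => SignType.sign (e i) : Fin d → ℝ) * Uᵀ) *ᵥ x)) i
        = SignType.sign (e i) * (Uᵀ *ᵥ x) i := by
    rw [Matrix.mulVec_mulVec, ← Matrix.mul_assoc, ← Matrix.mul_assoc, hU2, Matrix.one_mul,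
      ← Matrix.mulVec_mulVec, Matrix.mulVec_diagonal]
  refine ⟨U * diagonal (fun i => |e i|) * Uᵀ,
    U * diagonal (fun i => SignType.sign (e i) : Fin d → ℝ) * Uᵀ, ?_, ?_, ?_, ?_⟩
  · intro x hx
    rw [form]
    have : Uᵀ *ᵥ x ≠ 0 := by
      intro h
      apply hx
      have := congrArg (U *ᵥ ·) h
      simpa [Matrix.mulVec_mulVec, hU1] using this
    obtain ⟨i, hi⟩ := Function.ne_iff.1 this
    refine Finset.sum_pos' (fun j _ => mul_nonneg (abs_nonneg _) (mul_self_nonneg _)) ⟨i, Finset.mem_univ i, ?_⟩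
    have := abs_pos.2 (he0 i)
    have h2 : 0 < (Uᵀ *ᵥ x) i * (Uᵀ *ᵥ x) i := mul_self_pos.2 hi
    positivity
  · intro x
    conv in Sb S x x => rw [hSd]
    rw [form, form, ← Finset.sum_add_distrib]
    refine Finset.sum_nonneg fun i _ => ?_
    have := neg_abs_le (e i)
    rw [← add_mul]
    exact mul_nonneg (by linarith) (mul_self_nonneg _)
  · intro x
    conv in Sb S _ _ => rw [hSd]
    rw [form, form]
    refine Finset.sum_congr rfl fun i _ => ?_
    rw [hJ, ← self_mul_sign]; ring
  · intro x
    rw [form, form]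
    refine Finset.sum_congr rfl fun i _ => ?_
    rw [hJ]
    have : (SignType.sign (e i) : ℝ) * SignType.sign (e i) = 1 := by
      rcases lt_or_gt_of_ne (he0 i) with h | h
      · simp [sign_neg h]
      · simp [sign_pos h]
    linear_combination (|e i| * ((Uᵀ *ᵥ x) i * (Uᵀ *ᵥ x) i)) * this

end Algebra

/-! ### Maximal convex subsets of the epigraph and the theorem of Minty -/

section Minty

variable {d : ℕ} {S : Matrix (Fin d) (Fin d) ℝ}

variable (S) in
/-- The epigraph of the quadratic function `x ↦ S(x,x)/2`. -/
def epiQ : Set ((Fin d → ℝ) × ℝ) := {p | Sb S p.1 p.1 / 2 ≤ p.2}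

variable (S) in
/-- `C` is maximal among the convex subsets of the epigraph of `x ↦ S(x,x)/2`. -/
def MaxConv (C : Set ((Fin d → ℝ) × ℝ)) : Prop :=
  Convex ℝ C ∧ C ⊆ epiQ S ∧ ∀ D, Convex ℝ D → D ⊆ epiQ S → C ⊆ D → D = C

/-- The points where a set of pairs `(x,r)` touches the graph of `x ↦ S(x,x)/2`. -/
def contact (S : Matrix (Fin d) (Fin d) ℝ) (C : Set ((Fin d → ℝ) × ℝ)) : Set (Fin d → ℝ) :=
  {w | (w, Sb S w w / 2) ∈ C}

lemma exists_maxConv {E : Set ((Fin d → ℝ) × ℝ)} (hE : Convex ℝ E) (hEQ : E ⊆ epiQ S) :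
    ∃ C, E ⊆ C ∧ MaxConv S C := by
  obtain ⟨C, hEC, hC⟩ := zorn_subset_nonempty {D | Convex ℝ D ∧ D ⊆ epiQ S}
    (fun c hc hchain hne => ⟨⋃₀ c,
      ⟨hchain.directedOn.convex_sUnion fun s hs => (hc hs).1,
        sUnion_subset fun s hs => (hc hs).2⟩,
      fun s hs => subset_sUnion_of_mem hs⟩) E ⟨hE, hEQ⟩
  exact ⟨C, hEC, hC.prop.1, hC.prop.2, fun D hD hDQ hCD =>
    (hC.eq_of_subset ⟨hD, hDQ⟩ hCD).symm⟩

/-- A convex set in the epigraph of the quadratic function that touches the graph above `w` lies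
above the tangent at `w`. -/
lemma aff_le_of_mem_contact (hS : S.IsHermitian) {C : Set ((Fin d → ℝ) × ℝ)}
    (hC : Convex ℝ C) (hCQ : C ⊆ epiQ S) {w : Fin d → ℝ} (hw : w ∈ contact S C)
    {x : Fin d → ℝ} {r : ℝ} (hx : (x, r) ∈ C) : aff S w x ≤ r := by
  set a := Sb S w w with ha
  set b := Sb S w x with hb
  set e := Sb S x x with he
  -- compare the segment from `w` to `(x,r)` with the parabola, to first order at `w`
  have key : ∀ t : ℝ, 0 < t → t ≤ 1 → b - a / 2 - r ≤ t * (|a| + |b| + |e|) := by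
    intro t ht ht1
    have h := hCQ (hC hw hx (sub_nonneg.2 ht1) ht.le (by ring))
    simp only [epiQ, mem_ofPred_eq, Prod.fst_add, Prod.snd_add, Prod.smul_fst, Prod.smul_snd,
      Sb_add_left, Sb_add_right, Sb_smul_left, Sb_smul_right, smul_eq_mul, Sb_comm hS x w,
      ← ha, ← hb, ← he] at h
    have h2 : t * (b - a / 2 - r) ≤ t * (t * (b - a / 2 - e / 2)) := by nlinarith
    have h3 := le_of_mul_le_mul_left h2 ht
    refine h3.trans (mul_le_mul_of_nonneg_left ?_ ht.le)
    have := le_abs_self b; have := neg_abs_le a; have := neg_abs_le e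
    have := abs_nonneg a; have := abs_nonneg e
    linarith
  have hlim : Tendsto (fun t : ℝ => t * (|a| + |b| + |e|)) (nhdsWithin 0 (Ioi 0))
      (nhds (0 * (|a| + |b| + |e|))) :=
    ((continuous_id.mul continuous_const).tendsto 0).mono_left nhdsWithin_le_nhds
  have := ge_of_tendsto hlim (b := b - a / 2 - r) (by
    filter_upwards [Ioc_mem_nhdsGT (zero_lt_one' ℝ)] with t ht using key t ht.1 ht.2)
  unfold aff
  linarith

/-- If a maximal convex set lies above the tangent of the quadratic function at `w`, then it
touches the graph above `w`, since the convex hull of the set and of that point of the graph stays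
in the epigraph. -/
lemma MaxConv.mem_contact (hS : S.IsHermitian) {C : Set ((Fin d → ℝ) × ℝ)} (hC : MaxConv S C)
    (hne : C.Nonempty) {w : Fin d → ℝ} (hw : ∀ p ∈ C, aff S w p.1 ≤ p.2) :
    w ∈ contact S C := by
  have := hC.2.2 (convexHull ℝ (insert (w, Sb S w w / 2) C)) (convex_convexHull _ _) ?_
    ((subset_insert _ _).trans (subset_convexHull _ _))
  · unfold contact
    rw [mem_ofPred_eq, ← this]
    exact subset_convexHull _ _ (mem_insert _ _)
  · rw [convexHull_insert hne, hC.1.convexHull_eq, convexJoin_singleton_left]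
    rintro p hp
    simp only [mem_iUnion] at hp
    obtain ⟨⟨x, r⟩, hx, t, u, ht, hu, htu, rfl⟩ := hp
    have h1 := hw _ hx
    have h2 : Sb S x x / 2 ≤ r := hC.2.1 hx
    obtain rfl : t = 1 - u := by linarith
    simp only [epiQ, mem_ofPred_eq, Prod.fst_add, Prod.snd_add, Prod.smul_fst, Prod.smul_snd,
      Sb_add_left, Sb_add_right, Sb_smul_left, Sb_smul_right, smul_eq_mul, Sb_comm hS x w]
    simp only [aff] at h1
    have h3 := mul_le_mul_of_nonneg_left h1 (mul_nonneg ht hu)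
    have h4 := mul_le_mul_of_nonneg_left h2 (mul_nonneg hu hu)
    nlinarith

/-- A version of Minty's theorem: for every `u` there is a contact point `w` with
`S(w-u,w-u) ≤ -|S|(w-u,w-u)`. It follows by separating `C` from the hypograph of the concave
function `x ↦ S(x,x)/2 - (S + |S|)(x-u,x-u)/2`. -/
lemma MaxConv.minty (hS : S.IsHermitian) {C : Set ((Fin d → ℝ) × ℝ)} (hC : MaxConv S C)
    (hne : C.Nonempty) {P J : Matrix (Fin d) (Fin d) ℝ} (hP : ∀ x, x ≠ 0 → 0 < Sb P x x)
    (hPS : ∀ x, 0 ≤ Sb P x x + Sb S x x) (hSJ : ∀ x, Sb S x (J.mulVec x) = Sb P x x)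
    (hPJ : ∀ x, Sb P (J.mulVec x) (J.mulVec x) = Sb P x x) (hrank : IsUnit S.det)
    (u : Fin d → ℝ) :
    ∃ w ∈ contact S C, Sb S (w - u) (w - u) ≤ -Sb P (w - u) (w - u) := by
  have hP0 : ∀ x, 0 ≤ Sb P x x := fun x => by
    by_cases h : x = 0
    · simp [h, Sb]
    · exact (hP x h).le
  set g : (Fin d → ℝ) → ℝ := fun x => Sb S u u / 2 + Sb S u (x - u) - Sb P (x - u) (x - u) / 2
    with hg
  have hgc : Continuous g := by rw [hg]; fun_prop
  set O : Set ((Fin d → ℝ) × ℝ) := {p | p.2 < g p.1} with hO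
  have hOo : IsOpen O := isOpen_lt (by fun_prop) (by fun_prop)
  have hOc : Convex ℝ O := by
    rintro ⟨x, r⟩ hx ⟨y, s⟩ hy t v ht hv htv
    simp only [hO, mem_ofPred_eq, Prod.fst_add, Prod.snd_add, Prod.smul_fst, Prod.smul_snd,
      smul_eq_mul] at hx hy ⊢
    have h1 : t * g x + v * g y ≤ g (t • x + v • y) := by
      obtain rfl : t = 1 - v := by linarith
      have := mul_nonneg (mul_nonneg ht hv) (hP0 (x - y))
      simp only [hg, Sb_sub_left, Sb_sub_right, Sb_add_left, Sb_add_right, Sb_smul_left,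
        Sb_smul_right] at this ⊢
      nlinarith
    rcases ht.eq_or_lt with rfl | ht
    · obtain rfl : v = 1 := by linarith
      linarith
    · nlinarith [mul_lt_mul_of_pos_left hx ht, mul_le_mul_of_nonneg_left hy.le hv]
  have hdisj : Disjoint O C := by
    rw [Set.disjoint_left]
    rintro ⟨x, r⟩ hx hxC
    have h1 : Sb S x x / 2 ≤ r := hC.2.1 hxC
    have h2 := hPS (x - u)
    simp only [hO, hg, mem_ofPred_eq] at hx
    simp only [Sb_sub_left, Sb_sub_right, Sb_comm hS x u] at h2 hx
    linarith
  obtain ⟨ℓ, s, hℓO, hℓC⟩ := geometric_hahn_banach_open hOc hOo hC.1 hdisj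
  have hℓ (x : Fin d → ℝ) (r : ℝ) : ℓ (x, r) = ℓ (x, 0) + r * ℓ (0, 1) := by
    have : ((x, r) : (Fin d → ℝ) × ℝ) = (x, 0) + r • (0, 1) := by ext <;> simp
    rw [this, map_add, map_smul, smul_eq_mul]
  set β := ℓ (0, 1) with hβ
  -- the separating hyperplane is not vertical
  have hβ0 : 0 ≤ β := by
    by_contra hneg
    push Not at hneg
    set r := min (g 0 - 1) (s / β)
    have h1 : ℓ (0, r) < s := hℓO _ (by
      simp only [hO, mem_ofPred_eq]; linarith [min_le_left (g 0 - 1) (s / β)])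
    have h2 : ((0 : Fin d → ℝ), (0 : ℝ)) = 0 := rfl
    rw [hℓ, h2, map_zero, zero_add] at h1
    have : s / β * β ≤ r * β := mul_le_mul_of_nonpos_right (min_le_right _ _) hneg.le
    rw [div_mul_cancel₀ _ hneg.ne] at this
    linarith
  have hβ1 : 0 < β := by
    refine hβ0.lt_of_ne fun h0 => ?_
    have h1 : ∀ x, ℓ (x, 0) < s := fun x => by
      have := hℓO (x, g x - 1) (by simp [hO])
      rwa [hℓ, ← h0, mul_zero, add_zero] at this
    obtain ⟨⟨x, r⟩, hx⟩ := hne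
    have h2 := hℓC _ hx
    rw [hℓ, ← h0, mul_zero, add_zero] at h2
    linarith [h1 x]
  -- the normal of the hyperplane is represented through `S`
  obtain ⟨w', hw'⟩ : ∃ w', ∀ x, -(ℓ (x, 0)) / β = Sb S u x + Sb S w' x := by
    set a : Fin d → ℝ := fun i => -(ℓ (Pi.single i 1, 0)) / β with ha
    refine ⟨S⁻¹.mulVec a - u, fun x => ?_⟩
    have e1 : Sb S u x + Sb S (S⁻¹.mulVec a - u) x = a ⬝ᵥ x := by
      rw [Sb_sub_left, add_sub_cancel, Sb_comm hS, Sb, Matrix.mulVec_mulVec,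
        Matrix.mul_nonsing_inv _ hrank, Matrix.one_mulVec, dotProduct_comm]
    rw [e1]
    have e2 : ((x, 0) : (Fin d → ℝ) × ℝ) = ∑ i, x i • (Pi.single i 1, 0) := by
      ext j
      · simp [Prod.fst_sum, Finset.sum_apply, Pi.single_apply]
      · simp [Prod.snd_sum]
    rw [e2, map_sum, dotProduct, neg_div, Finset.sum_div, ← Finset.sum_neg_distrib]
    refine Finset.sum_congr rfl fun i _ => ?_
    rw [map_smul, smul_eq_mul, ha]; ring
  have lowO : ∀ x, g x ≤ s / β + (Sb S u x + Sb S w' x) := fun x => by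
    refine le_of_forall_lt fun r hr => ?_
    have := hℓO (x, r) hr
    rw [hℓ] at this
    rw [← hw', ← add_div, lt_div_iff₀ hβ1]; linarith
  have upC : ∀ p ∈ C, s / β + (Sb S u p.1 + Sb S w' p.1) ≤ p.2 := fun p hp => by
    have := hℓC p hp
    rw [show p = (p.1, p.2) from rfl, hℓ] at this
    rw [← hw', ← add_div, div_le_iff₀ hβ1]; linarith
  -- the point where the affine function is closest to the concave one
  have hα := lowO (u - J.mulVec w')
  simp only [hg, sub_sub_cancel_left, Sb_neg_left, Sb_sub_right, neg_neg, hPJ,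
    hSJ] at hα
  have hq := hPS w'
  have hupC' : ∀ p ∈ C, aff S (u + w') p.1 + (Sb P w' w' + Sb S w' w') / 2 ≤ p.2 := by
    intro p hp
    have := upC p hp
    simp only [aff, Sb_add_left, Sb_add_right, Sb_comm hS u w'] at this ⊢
    linarith
  have hmem : u + w' ∈ contact S C := hC.mem_contact hS hne fun p hp => by
    linarith [hupC' p hp]
  refine ⟨u + w', hmem, ?_⟩
  have := hupC' _ hmem
  simp only [aff] at this
  rw [add_sub_cancel_left]
  linarith

/-- The contact set of a maximal convex subset of the epigraph is maximal `S`-monotone. -/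
lemma MaxConv.maxSMono (hS : S.IsHermitian) (hrank : IsUnit S.det)
    {C : Set ((Fin d → ℝ) × ℝ)} (hC : MaxConv S C) (hne : C.Nonempty) :
    MaxSMono S (contact S C) := by
  obtain ⟨P, J, hP, hPS, hSJ, hPJ⟩ := exists_abs_sign hS hrank
  refine ⟨fun x hx y hy => ?_, fun H hH hsub => (hsub.antisymm fun u hu => ?_).symm⟩
  · have := aff_le_of_mem_contact hS hC.1 hC.2.1 hy hx
    rw [aff_eq hS] at this
    linarith
  · obtain ⟨w, hw, hwu⟩ := hC.minty hS hne hP hPS hSJ hPJ hrank u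
    have h1 := hH w (hsub hw) u hu
    have : w - u = 0 := by
      by_contra h
      linarith [hP _ h]
    rwa [← sub_eq_zero.1 this]

end Minty

/-! ### Martingale property and perturbation of optimal plans -/

section Martingale

variable {d : ℕ} {S : Matrix (Fin d) (Fin d) ℝ}

lemma MeasureTheory.MemLp.integrable_Sb {Ω : Type*} {mΩ : MeasurableSpace Ω} {μ : Measure Ω}
    {f g : Ω → Fin d → ℝ} (hf : MemLp f 2 μ) (hg : MemLp g 2 μ)
    (S : Matrix (Fin d) (Fin d) ℝ) : Integrable (fun ω => Sb S (f ω) (g ω)) μ := by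
  have h := (hf.norm.integrable_mul hg.norm).const_mul ‖SbL S‖
  refine h.mono' ?_ (ae_of_all _ fun ω => ?_)
  · exact continuous_Sb.comp_aestronglyMeasurable (hf.1.prodMk hg.1)
  · have := (SbL S).le_opNorm₂ (f ω) (g ω)
    rw [SbL_apply] at this
    simpa [mul_assoc] using this

/-- Pulling an `m`-measurable factor out of the conditional expectation, under the integral. -/
lemma integral_Sb_condExp {Ω : Type*} {m mΩ : MeasurableSpace Ω} (hm : m ≤ mΩ) {μ : Measure Ω}
    [IsFiniteMeasure μ] {f U : Ω → Fin d → ℝ} (hU : StronglyMeasurable[m] U) (hU2 : MemLp U 2 μ)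
    (hf : MemLp f 2 μ) (S : Matrix (Fin d) (Fin d) ℝ) :
    ∫ ω, Sb S (U ω) (f ω) ∂μ = ∫ ω, Sb S (U ω) ((μ[f | m]) ω) ∂μ := by
  have h := condExp_bilin_of_stronglyMeasurable_left (m := m) (μ := μ) (SbL S) hU
    (hU2.integrable_Sb hf S) (hf.integrable one_le_two)
  rw [← integral_condExp hm]
  exact integral_congr_ae h

variable {ν : Measure (Fin d → ℝ)} {γ : Measure ((Fin d → ℝ) × (Fin d → ℝ))}

/-- The `σ`-algebra generated by the first coordinate. -/
abbrev sigX (d : ℕ) : MeasurableSpace ((Fin d → ℝ) × (Fin d → ℝ)) :=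
  MeasurableSpace.comap Prod.fst inferInstance

lemma sigX_le (d : ℕ) : sigX d ≤ Prod.instMeasurableSpace := measurable_fst.comap_le

lemma stronglyMeasurable_fst_sigX (d : ℕ) :
    StronglyMeasurable[sigX d] (fun p : (Fin d → ℝ) × (Fin d → ℝ) => p.1) :=
  (comap_measurable (Prod.fst : (Fin d → ℝ) × (Fin d → ℝ) → _)).stronglyMeasurable

lemma MGamma.memLp_fst (h : MGamma ν γ) : MemLp (fun p => p.1) 2 γ := by
  rw [memLp_two_iff_integrable_sq_norm measurable_fst.aestronglyMeasurable]
  refine h.2.2.1.mono' (by fun_prop) (ae_of_all _ fun p => ?_)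
  rw [Real.norm_of_nonneg (by positivity)]
  nlinarith [sq_nonneg ‖p.2‖]

lemma MGamma.memLp_snd (h : MGamma ν γ) : MemLp (fun p => p.2) 2 γ := by
  rw [memLp_two_iff_integrable_sq_norm measurable_snd.aestronglyMeasurable]
  refine h.2.2.1.mono' (by fun_prop) (ae_of_all _ fun p => ?_)
  rw [Real.norm_of_nonneg (by positivity)]
  nlinarith [sq_nonneg ‖p.1‖]

/-- The martingale property tested against square integrable functions of `x`. -/
lemma MGamma.integral_Sb (h : MGamma ν γ) {U : (Fin d → ℝ) × (Fin d → ℝ) → Fin d → ℝ}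
    (hU : StronglyMeasurable[sigX d] U) (hU2 : MemLp U 2 γ) (S : Matrix (Fin d) (Fin d) ℝ) :
    ∫ p, Sb S (U p) p.2 ∂γ = ∫ p, Sb S (U p) p.1 ∂γ := by
  have := h.1
  rw [integral_Sb_condExp (sigX_le d) hU hU2 h.memLp_snd]
  refine integral_congr_ae ?_
  filter_upwards [h.2.2.2] with p hp
  rw [hp]

lemma MGamma.primalVal_eq (h : MGamma ν γ) (S : Matrix (Fin d) (Fin d) ℝ) :
    primalVal S γ = ∫ p, Sb S p.1 p.1 / 2 ∂γ := by
  rw [primalVal, h.integral_Sb (stronglyMeasurable_fst_sigX d) h.memLp_fst, integral_div]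
  ring

lemma MGamma.integrable_aff (h : MGamma ν γ) (S : Matrix (Fin d) (Fin d) ℝ) :
    Integrable (fun p => aff S p.1 p.2) γ :=
  (h.memLp_fst.integrable_Sb h.memLp_snd S).sub
    ((h.memLp_fst.integrable_Sb h.memLp_fst S).div_const 2)

lemma MGamma.primalVal_eq_aff (h : MGamma ν γ) (S : Matrix (Fin d) (Fin d) ℝ) :
    primalVal S γ = ∫ p, aff S p.1 p.2 ∂γ := by
  unfold aff
  rw [integral_sub (h.memLp_fst.integrable_Sb h.memLp_snd S)
    ((h.memLp_fst.integrable_Sb h.memLp_fst S).div_const 2),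
    h.integral_Sb (stronglyMeasurable_fst_sigX d) h.memLp_fst, primalVal,
    h.integral_Sb (stronglyMeasurable_fst_sigX d) h.memLp_fst, integral_div]
  ring

end Martingale

section Perturbation

variable {d : ℕ} {S : Matrix (Fin d) (Fin d) ℝ}
  {ν : Measure (Fin d → ℝ)} {γ γ₁ ρ : Measure ((Fin d → ℝ) × (Fin d → ℝ))}

/-- The plan obtained from `γ = γ₁ + ε ρ` when the part `ε ρ` is sent to a single atom at its
`y`-barycenter and the `x`-coordinate of `γ₁` is replaced by the conditional expectation of `y`,
which restores the martingale property. -/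
def atomPlan (γ₁ ρ : Measure ((Fin d → ℝ) × (Fin d → ℝ))) (ε : NNReal) :
    Measure ((Fin d → ℝ) × (Fin d → ℝ)) :=
  γ₁.map (fun p => ((γ₁[fun p => p.2 | sigX d]) p, p.2)) +
    ε • ρ.map (fun p => (∫ q, q.2 ∂ρ, p.2))

lemma measurable_condExp_sigX :
    Measurable (γ₁[fun p : (Fin d → ℝ) × (Fin d → ℝ) => p.2 | sigX d]) :=
  (stronglyMeasurable_condExp.mono (sigX_le d)).measurable

lemma measurable_newMap : Measurable (fun p : (Fin d → ℝ) × (Fin d → ℝ) =>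
    ((γ₁[fun p => p.2 | sigX d]) p, p.2)) :=
  measurable_condExp_sigX.prodMk measurable_snd

lemma measurable_atomMap (z : Fin d → ℝ) :
    Measurable (fun p : (Fin d → ℝ) × (Fin d → ℝ) => (z, p.2)) :=
  measurable_const.prodMk measurable_snd

lemma integrable_atomPlan {F : Type*} [NormedAddCommGroup F]
    {ε : NNReal} {f : (Fin d → ℝ) × (Fin d → ℝ) → F} (hf : StronglyMeasurable f)
    (h1 : Integrable (fun p => f ((γ₁[fun p => p.2 | sigX d]) p, p.2)) γ₁)
    (h2 : Integrable (fun p => f (∫ q, q.2 ∂ρ, p.2)) ρ) :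
    Integrable f (atomPlan γ₁ ρ ε) := by
  refine integrable_add_measure.2 ⟨?_, Integrable.smul_measure_nnreal ?_⟩
  · exact (integrable_map_measure hf.aestronglyMeasurable measurable_newMap.aemeasurable).2 h1
  · exact (integrable_map_measure hf.aestronglyMeasurable
      (measurable_atomMap _).aemeasurable).2 h2

lemma integral_atomPlan {F : Type*} [NormedAddCommGroup F] [NormedSpace ℝ F]
    {ε : NNReal} {f : (Fin d → ℝ) × (Fin d → ℝ) → F} (hf : StronglyMeasurable f)
    (h1 : Integrable (fun p => f ((γ₁[fun p => p.2 | sigX d]) p, p.2)) γ₁)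
    (h2 : Integrable (fun p => f (∫ q, q.2 ∂ρ, p.2)) ρ) :
    ∫ p, f p ∂(atomPlan γ₁ ρ ε) = ∫ p, f ((γ₁[fun p => p.2 | sigX d]) p, p.2) ∂γ₁ +
      (ε : ℝ) • ∫ p, f (∫ q, q.2 ∂ρ, p.2) ∂ρ := by
  have i1 : Integrable f (γ₁.map (fun p => ((γ₁[fun p => p.2 | sigX d]) p, p.2))) :=
    (integrable_map_measure hf.aestronglyMeasurable measurable_newMap.aemeasurable).2 h1
  have i2 : Integrable f (ρ.map (fun p => (∫ q, q.2 ∂ρ, p.2))) :=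
    (integrable_map_measure hf.aestronglyMeasurable (measurable_atomMap _).aemeasurable).2 h2
  rw [atomPlan, integral_add_measure i1 i2.smul_measure_nnreal, integral_smul_nnreal_measure,
    integral_map measurable_newMap.aemeasurable hf.aestronglyMeasurable,
    integral_map (measurable_atomMap _).aemeasurable hf.aestronglyMeasurable]
  rfl

/-- The perturbed plan has the same `y`-marginal and the martingale property. -/
lemma MGamma.perturb (h : MGamma ν γ) [IsFiniteMeasure γ₁] [IsProbabilityMeasure ρ] {ε : NNReal}
    (hsum : γ₁ + ε • ρ = γ) (hy1 : MemLp (fun p => p.2) 2 γ₁) (hy2 : MemLp (fun p => p.2) 2 ρ) :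
    MGamma ν (atomPlan γ₁ ρ ε) := by
  set T := γ₁[fun p : (Fin d → ℝ) × (Fin d → ℝ) => p.2 | sigX d] with hT
  have hT2 : MemLp T 2 γ₁ := hy1.condExp one_le_two
  have := h.1
  have hprob : IsProbabilityMeasure (atomPlan γ₁ ρ ε) := by
    constructor
    rw [atomPlan, Measure.add_apply, Measure.smul_apply,
      Measure.map_apply measurable_newMap .univ,
      Measure.map_apply (measurable_atomMap _) .univ, preimage_univ, preimage_univ,
      ← Measure.smul_apply, ← Measure.add_apply, hsum, measure_univ]
  refine ⟨hprob, ?_, ?_, ?_⟩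
  · rw [atomPlan, Measure.map_add _ _ measurable_snd, Measure.map_smul,
      Measure.map_map measurable_snd measurable_newMap,
      Measure.map_map measurable_snd (measurable_atomMap _), ← h.2.1, ← hsum,
      Measure.map_add _ _ measurable_snd, Measure.map_smul]
    rfl
  · refine integrable_atomPlan (by fun_prop) ?_ ?_
    · exact hT2.norm.integrable_sq.add hy1.norm.integrable_sq
    · exact (integrable_const (‖∫ q, q.2 ∂ρ‖ ^ 2) (μ := ρ)).add hy2.norm.integrable_sq
  · have hmeas1 : Measurable (Prod.fst : (Fin d → ℝ) × (Fin d → ℝ) → _) := measurable_fst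
    have i1 : Integrable (fun p => p.1) (atomPlan γ₁ ρ ε) :=
      integrable_atomPlan measurable_fst.stronglyMeasurable (hT2.integrable one_le_two)
        (integrable_const _)
    have i2 : Integrable (fun p => p.2) (atomPlan γ₁ ρ ε) :=
      integrable_atomPlan measurable_snd.stronglyMeasurable (hy1.integrable one_le_two)
        (hy2.integrable one_le_two)
    refine (ae_eq_condExp_of_forall_setIntegral_eq (sigX_le d) i2 (fun s _ _ => i1.integrableOn)
      ?_ (stronglyMeasurable_fst_sigX d).aestronglyMeasurable).symm
    rintro s ⟨A, hA, rfl⟩ -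
    have hs : MeasurableSet (Prod.fst ⁻¹' A : Set ((Fin d → ℝ) × (Fin d → ℝ))) :=
      measurable_fst hA
    have hTA : MeasurableSet[sigX d] (T ⁻¹' A) := stronglyMeasurable_condExp.measurable hA
    have hTA' : MeasurableSet (T ⁻¹' A) := sigX_le d _ hTA
    have e1 (g : (Fin d → ℝ) × (Fin d → ℝ) → Fin d → ℝ) (hg : Measurable g)
        (hg1 : Integrable (fun p => g (T p, p.2)) γ₁)
        (hg2 : Integrable (fun p => g (∫ q, q.2 ∂ρ, p.2)) ρ) :
        ∫ p in Prod.fst ⁻¹' A, g p ∂(atomPlan γ₁ ρ ε) =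
          ∫ p in T ⁻¹' A, g (T p, p.2) ∂γ₁ +
            (ε : ℝ) • A.indicator (fun _ => ∫ p, g (∫ q, q.2 ∂ρ, p.2) ∂ρ) (∫ q, q.2 ∂ρ) := by
      rw [← integral_indicator hs, integral_atomPlan (hg.stronglyMeasurable.indicator hs),
        ← integral_indicator hTA']
      · congr 2
        by_cases hz : ∫ q, q.2 ∂ρ ∈ A
        · simp [indicator, hz]
        · simp [indicator, hz]
      · exact hg1.indicator hTA'
      · by_cases hz : ∫ q, q.2 ∂ρ ∈ A
        · simpa [indicator, hz] using hg2
        · simp [indicator, hz]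
    rw [e1 _ measurable_fst (hT2.integrable one_le_two) (integrable_const _),
      e1 _ measurable_snd (hy1.integrable one_le_two) (hy2.integrable one_le_two),
      setIntegral_condExp (sigX_le d) (hy1.integrable one_le_two) hTA]
    simp

/-- First order expansion of the primal value along `atomPlan`. The condition `ε N ≤ 1/2` makes
`γ` and `γ₁ = γ - ε ρ` comparable, and the error is `O(ε²)` because the displacement
`D = E_{γ₁}[y|x] - x` has `L²` norm of order `ε`. -/
lemma MGamma.exists_perturbation (h : MGamma ν γ) (hS : S.IsHermitian) [IsProbabilityMeasure ρ]
    {N : NNReal} (hN : 0 < N) (hρ : ρ ≤ N • γ) :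
    ∃ C : ℝ, ∀ ε : NNReal, ε * N ≤ 1 / 2 → ∃ γ', MGamma ν γ' ∧
      primalVal S γ + ε * (Sb S (∫ p, p.2 ∂ρ) (∫ p, p.2 ∂ρ) / 2 - ∫ p, aff S p.1 p.2 ∂ρ)
        - ε ^ 2 * C ≤ primalVal S γ' := by
  have := h.1
  set I : Matrix (Fin d) (Fin d) ℝ := 1 with hI
  have hIx (x y : Fin d → ℝ) : Sb I x y = x ⬝ᵥ y := by simp [Sb, hI]
  have hI0 (x : Fin d → ℝ) : 0 ≤ Sb I x x := by
    rw [hIx]; exact Finset.sum_nonneg fun i _ => mul_self_nonneg _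
  have hIh : I.IsHermitian := Matrix.isHermitian_one
  have hSI (x : Fin d → ℝ) : |Sb S x x| ≤ ‖SbL S‖ * Sb I x x := by
    have h1 := (SbL S).le_opNorm₂ x x
    have h2 : ‖x‖ * ‖x‖ ≤ Sb I x x := by
      rw [← sq, ← Real.le_sqrt (norm_nonneg _) (hI0 x), pi_norm_le_iff_of_nonneg (Real.sqrt_nonneg _)]
      intro i
      refine Real.le_sqrt_of_sq_le ?_
      rw [hIx, Real.norm_eq_abs, sq_abs, sq]
      exact Finset.single_le_sum (f := fun i => x i * x i) (fun j _ => mul_self_nonneg _)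
        (Finset.mem_univ i)
    calc |Sb S x x| ≤ ‖SbL S‖ * ‖x‖ * ‖x‖ := h1
      _ = ‖SbL S‖ * (‖x‖ * ‖x‖) := by ring
      _ ≤ _ := by gcongr
  set X : (Fin d → ℝ) × (Fin d → ℝ) → Fin d → ℝ := fun p => p.1
  set Y : (Fin d → ℝ) × (Fin d → ℝ) → Fin d → ℝ := fun p => p.2
  have hX := h.memLp_fst
  have hY := h.memLp_snd
  set V : (Fin d → ℝ) × (Fin d → ℝ) → Fin d → ℝ := fun p => p.2 - p.1
  have hV : MemLp V 2 γ := hY.sub hX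
  refine ⟨‖SbL S‖ * N ^ 2 * ∫ p, Sb I (V p) (V p) ∂γ, fun ε hε => ?_⟩
  have hερ : ε • ρ ≤ γ := by
    intro A
    have h1 := hρ A
    simp only [Measure.smul_apply, ENNReal.smul_def, smul_eq_mul] at h1 ⊢
    calc (ε : ENNReal) * ρ A ≤ ε * (N * γ A) := by gcongr
      _ = ((ε * N : NNReal) : ENNReal) * γ A := by push_cast; ring
      _ ≤ (1 : NNReal) * γ A := by
          gcongr; exact hε.trans (by norm_num)
      _ = γ A := by simp
  set γ₁ := γ - ε • ρ
  have hsum : γ₁ + ε • ρ = γ := Measure.sub_add_cancel_of_le hερ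
  have hγ₁γ : γ₁ ≤ γ := hsum ▸ Measure.le_add_right le_rfl
  have : IsFiniteMeasure γ₁ := isFiniteMeasure_of_le γ hγ₁γ
  have hγγ₁ : γ ≤ (2 : NNReal) • γ₁ := by
    refine Measure.le_iff.2 fun A _ => ?_
    have h1 : γ A = γ₁ A + ε * ρ A := by
      conv_lhs => rw [← hsum]
      rw [Measure.add_apply, Measure.smul_apply, ENNReal.smul_def, smul_eq_mul]
    have h2 : (ε : ENNReal) * ρ A ≤ γ A / 2 := by
      have h1 := hρ A
      simp only [Measure.smul_apply, ENNReal.smul_def, smul_eq_mul] at h1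
      calc (ε : ENNReal) * ρ A ≤ ε * (N * γ A) := by gcongr
        _ = ((ε * N : NNReal) : ENNReal) * γ A := by push_cast; ring
        _ ≤ (1 / 2 : NNReal) * γ A := by gcongr
        _ = γ A / 2 := by
          rw [ENNReal.div_eq_inv_mul, one_div, ENNReal.coe_inv two_ne_zero]; norm_cast
    have h3 : γ A / 2 ≤ γ₁ A := by
      refine ENNReal.le_of_add_le_add_right (a := γ A / 2) (by finiteness) ?_
      rw [ENNReal.add_halves]
      calc γ A = _ := h1
        _ ≤ _ := by gcongr
    simp only [Measure.smul_apply, ENNReal.smul_def, smul_eq_mul]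
    calc γ A = γ A / 2 + γ A / 2 := (ENNReal.add_halves _).symm
      _ ≤ γ₁ A + γ₁ A := by gcongr
      _ = _ := by rw [← two_mul]; norm_cast
  have lpρ {f : (Fin d → ℝ) × (Fin d → ℝ) → Fin d → ℝ} (hf : MemLp f 2 γ) : MemLp f 2 ρ :=
    hf.of_measure_le_smul (c := N) (by simp) hρ
  have lp1 {f : (Fin d → ℝ) × (Fin d → ℝ) → Fin d → ℝ} (hf : MemLp f 2 γ) : MemLp f 2 γ₁ :=
    hf.mono_measure hγ₁γ
  -- splitting of integrals along `γ = γ₁ + ε ρ`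
  have split {f : (Fin d → ℝ) × (Fin d → ℝ) → ℝ} (hf1 : Integrable f γ) :
      ∫ p, f p ∂γ = ∫ p, f p ∂γ₁ + ε * ∫ p, f p ∂ρ := by
    have hf2 : Integrable f ρ := hf1.of_measure_le_smul (c := N) (by simp) hρ
    conv_lhs => rw [← hsum]
    rw [integral_add_measure (hf1.mono_measure hγ₁γ) hf2.smul_measure_nnreal,
      integral_smul_nnreal_measure]
    rfl
  refine ⟨atomPlan γ₁ ρ ε, h.perturb hsum (lp1 hY) (lpρ hY), ?_⟩
  set T := γ₁[fun p : (Fin d → ℝ) × (Fin d → ℝ) => p.2 | sigX d] with hT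
  have hT1 : MemLp T 2 γ₁ := (lp1 hY).condExp one_le_two
  have hTγ : MemLp T 2 γ := hT1.of_measure_le_smul (c := (2 : NNReal)) (by simp) hγγ₁
  have hTm : StronglyMeasurable[sigX d] T := stronglyMeasurable_condExp
  set D : (Fin d → ℝ) × (Fin d → ℝ) → Fin d → ℝ := fun p => T p - X p
  have hDm : StronglyMeasurable[sigX d] D := hTm.sub (stronglyMeasurable_fst_sigX d)
  have hD : MemLp D 2 γ := hTγ.sub hX
  have iS (B : Matrix (Fin d) (Fin d) ℝ) {f g : (Fin d → ℝ) × (Fin d → ℝ) → Fin d → ℝ}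
      (hf : MemLp f 2 γ) (hg : MemLp g 2 γ) : Integrable (fun p => Sb B (f p) (g p)) γ :=
    hf.integrable_Sb hg B
  have iS1 (B : Matrix (Fin d) (Fin d) ℝ) {f g : (Fin d → ℝ) × (Fin d → ℝ) → Fin d → ℝ}
      (hf : MemLp f 2 γ) (hg : MemLp g 2 γ) : Integrable (fun p => Sb B (f p) (g p)) γ₁ :=
    (iS B hf hg).mono_measure hγ₁γ
  have iSρ (B : Matrix (Fin d) (Fin d) ℝ) {f g : (Fin d → ℝ) × (Fin d → ℝ) → Fin d → ℝ}
      (hf : MemLp f 2 γ) (hg : MemLp g 2 γ) : Integrable (fun p => Sb B (f p) (g p)) ρ :=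
    (lpρ hf).integrable_Sb (lpρ hg) B
  have tower (B : Matrix (Fin d) (Fin d) ℝ) {U : (Fin d → ℝ) × (Fin d → ℝ) → Fin d → ℝ}
      (hUm : StronglyMeasurable[sigX d] U) (hU : MemLp U 2 γ) :
      ∫ p, Sb B (U p) (Y p) ∂γ₁ = ∫ p, Sb B (U p) (T p) ∂γ₁ :=
    integral_Sb_condExp (sigX_le d) hUm (lp1 hU) (lp1 hY) B
  -- `D` is of order `ε` in `L²`: as `∫ D·V dγ = 0`, one has `a = -ε ∫ D·V dρ`, and the
  -- inequality of Young absorbs the part with `D`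
  set a := ∫ p, Sb I (D p) (D p) ∂γ₁ with ha
  set b := ∫ p, Sb I (V p) (V p) ∂γ with hb
  have hab : a ≤ 2 * (ε ^ 2 * N ^ 2 * b) := by
    have e1 : a = ∫ p, Sb I (D p) (V p) ∂γ₁ := by
      have h1 := tower I hDm hD
      have h2 : ∀ p, Sb I (D p) (D p) = Sb I (D p) (T p) - Sb I (D p) (X p) :=
        fun p => Sb_sub_right _ _ _
      have h3 : ∀ p, Sb I (D p) (V p) = Sb I (D p) (Y p) - Sb I (D p) (X p) :=
        fun p => Sb_sub_right _ _ _
      simp only [ha, h2, h3]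
      rw [integral_sub (iS1 I hD hTγ) (iS1 I hD hX), integral_sub (iS1 I hD hY) (iS1 I hD hX), h1]
    have e2 : ∫ p, Sb I (D p) (V p) ∂γ = 0 := by
      have h3 : ∀ p, Sb I (D p) (V p) = Sb I (D p) (Y p) - Sb I (D p) (X p) :=
        fun p => Sb_sub_right _ _ _
      simp only [h3]
      rw [integral_sub (iS I hD hY) (iS I hD hX), h.integral_Sb hDm hD, sub_self]
    have e3 := split (iS I hD hV)
    rw [e2, ← e1, ← integral_const_mul] at e3
    have hN' : (0 : ℝ) < N := hN
    have e4 : -∫ p, ε * Sb I (D p) (V p) ∂ρ ≤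
        ∫ p, (1 / (4 * N) * Sb I (D p) (D p) + ε ^ 2 * N * Sb I (V p) (V p)) ∂ρ := by
      rw [← integral_neg]
      refine integral_mono ((iSρ I hD hV).const_mul _).neg
        (((iSρ I hD hD).const_mul _).add ((iSρ I hV hV).const_mul _)) fun p => ?_
      have h1 := hI0 (D p + (2 * N * ε : ℝ) • V p)
      simp only [Sb_add_left, Sb_add_right, Sb_smul_left, Sb_smul_right,
        Sb_comm hIh (V p) (D p)] at h1
      have h2 : 1 / (4 * (N : ℝ)) * Sb I (D p) (D p) + ε ^ 2 * N * Sb I (V p) (V p)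
          - -(ε * Sb I (D p) (V p)) = 1 / (4 * N) * (Sb I (D p) (D p) +
            2 * N * ε * Sb I (D p) (V p) + 2 * N * ε * (Sb I (D p) (V p) +
              2 * N * ε * Sb I (V p) (V p))) := by
        field_simp; ring
      have h3 : (0 : ℝ) ≤ 1 / (4 * N) := by positivity
      have h4 := mul_nonneg h3 h1
      simp only
      linarith
    rw [integral_add ((iSρ I hD hD).const_mul _) ((iSρ I hV hV).const_mul _),
      integral_const_mul (1 / (4 * (N : ℝ))), integral_const_mul (ε ^ 2 * (N : ℝ))] at e4
    have e5 : ∫ p, Sb I (V p) (V p) ∂ρ ≤ N * b := by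
      have := integral_mono_measure hρ (ae_of_all _ fun p => hI0 (V p))
        (iS I hV hV).smul_measure_nnreal
      rwa [integral_smul_nnreal_measure] at this
    have e6 : ∫ p, Sb I (D p) (D p) ∂ρ ≤ N * (2 * a) := by
      have hle : ρ ≤ N • (2 : NNReal) • γ₁ := hρ.trans fun A => by
        have := hγγ₁ A
        simp only [Measure.smul_apply, ENNReal.smul_def, smul_eq_mul] at this ⊢
        gcongr
      have := integral_mono_measure hle (ae_of_all _ fun p => hI0 (D p))
        (iS1 I hD hD).smul_measure_nnreal.smul_measure_nnreal
      rwa [integral_smul_nnreal_measure, integral_smul_nnreal_measure] at this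
    have e7 : 1 / (4 * (N : ℝ)) * ∫ p, Sb I (D p) (D p) ∂ρ ≤ a / 2 := by
      calc _ ≤ 1 / (4 * (N : ℝ)) * (N * (2 * a)) := by gcongr
        _ = a / 2 := by field_simp; ring
    have e8 : (ε : ℝ) ^ 2 * N * ∫ p, Sb I (V p) (V p) ∂ρ ≤ ε ^ 2 * N * (N * b) := by gcongr
    rw [integral_const_mul] at e3 e4
    nlinarith
  -- the value of the new plan
  have v0 : primalVal S (atomPlan γ₁ ρ ε) = (1 / 2) * (∫ p, Sb S (T p) (T p) ∂γ₁ +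
      ε * Sb S (∫ p, p.2 ∂ρ) (∫ p, p.2 ∂ρ)) := by
    rw [primalVal, integral_atomPlan continuous_Sb.stronglyMeasurable (iS1 S hTγ hY)
      ((memLp_const _).integrable_Sb (lpρ hY) S), ← tower S hTm hTγ, smul_eq_mul]
    congr 3
    exact (SbL S (∫ p, p.2 ∂ρ)).integral_comp_comm ((lpρ hY).integrable one_le_two)
  have v1 : ∫ p, Sb S (T p) (T p) ∂γ₁ =
      2 * ∫ p, aff S (X p) (Y p) ∂γ₁ + ∫ p, Sb S (D p) (D p) ∂γ₁ := by
    have h1 : ∀ p, Sb S (T p) (T p) =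
        2 * Sb S (X p) (T p) - Sb S (X p) (X p) + Sb S (D p) (D p) := fun p => by
      simp only [D, Sb_sub_left, Sb_sub_right, Sb_comm hS (T p) (X p)]; ring
    have i1 : Integrable (fun p => 2 * Sb S (X p) (T p)) γ₁ := (iS1 S hX hTγ).const_mul 2
    have i2 : Integrable (fun p => Sb S (X p) (X p)) γ₁ := iS1 S hX hX
    have i3 : Integrable (fun p => Sb S (X p) (Y p)) γ₁ := iS1 S hX hY
    have i4 : Integrable (fun p => 2 * Sb S (X p) (T p) - Sb S (X p) (X p)) γ₁ := i1.sub i2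
    have tw : ∫ p, Sb S (X p) (Y p) ∂γ₁ = ∫ p, Sb S (X p) (T p) ∂γ₁ :=
      tower S (stronglyMeasurable_fst_sigX d) hX
    simp only [h1, aff]
    rw [integral_add i4 (iS1 S hD hD), integral_sub i1 i2, integral_sub i3 (i2.div_const 2),
      integral_const_mul, integral_div, tw]
    ring
  have v2 : -(‖SbL S‖ * a) ≤ ∫ p, Sb S (D p) (D p) ∂γ₁ := by
    rw [ha, ← integral_const_mul, ← integral_neg]
    exact integral_mono ((iS1 I hD hD).const_mul _).neg (iS1 S hD hD) fun p => by
      simpa using (abs_le.1 (hSI (D p))).1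
  have v3 := split (h.integrable_aff S)
  rw [← h.primalVal_eq_aff S] at v3
  have v4 := mul_le_mul_of_nonneg_left hab (norm_nonneg (SbL S))
  rw [v0, v1]
  simp only [X, Y] at v3 ⊢
  nlinarith

/-- First order optimality condition: an optimal plan does not gain from sending a part of its mass
to a new atom. -/
lemma PrimalOpt.le_integral_aff (h : PrimalOpt S ν γ) (hS : S.IsHermitian)
    [IsProbabilityMeasure ρ] {N : NNReal} (hρ : ρ ≤ N • γ) :
    Sb S (∫ p, p.2 ∂ρ) (∫ p, p.2 ∂ρ) / 2 ≤ ∫ p, aff S p.1 p.2 ∂ρ := by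
  have := h.1.1
  have hN : 0 < N := by
    rw [pos_iff_ne_zero]
    rintro rfl
    have := hρ univ
    simp at this
  obtain ⟨C, hC⟩ := h.1.exists_perturbation hS hN hρ
  set Δ := Sb S (∫ p, p.2 ∂ρ) (∫ p, p.2 ∂ρ) / 2 - ∫ p, aff S p.1 p.2 ∂ρ
  suffices Δ ≤ 0 by simpa [Δ] using this
  have hN' : (0 : ℝ) < N := hN
  have key : ∀ t : ℝ, 0 < t → t ≤ 1 / (2 * N) → Δ ≤ t * C := by
    intro t ht ht1
    lift t to NNReal using ht.le
    obtain ⟨γ', hγ', hle⟩ := hC t (by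
      rw [← NNReal.coe_le_coe]; push_cast
      rw [le_div_iff₀ (by positivity)] at ht1
      linarith)
    have := h.2 γ' hγ'
    have h1 : (t : ℝ) * Δ ≤ t * (t * C) := by linarith
    exact le_of_mul_le_mul_left h1 ht
  have hlim : Tendsto (fun t : ℝ => t * C) (nhdsWithin 0 (Ioi 0)) (nhds (0 * C)) :=
    ((continuous_id.mul continuous_const).tendsto 0).mono_left nhdsWithin_le_nhds
  rw [zero_mul] at hlim
  refine ge_of_tendsto hlim ?_
  filter_upwards [Ioc_mem_nhdsGT (show (0 : ℝ) < 1 / (2 * N) by positivity)] with t ht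
  exact key t ht.1 ht.2

end Perturbation

/-! ### Strong duality -/

section Support

variable {α : Type*} [TopologicalSpace α] [MeasurableSpace α]

lemma ae_mem_msupp [HereditarilyLindelofSpace α] (μ : Measure α) : ∀ᵐ x ∂μ, x ∈ msupp μ := by
  filter_upwards [Measure.support_mem_ae (μ := μ)] with x hx
  rw [Measure.mem_support_iff_forall] at hx
  exact fun U hU => (hx U hU).ne'

lemma msupp_subset_of_isClosed {μ : Measure α} {F : Set α} (hF : IsClosed F)
    (h : ∀ᵐ x ∂μ, x ∈ F) : msupp μ ⊆ F := by
  intro x hx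
  by_contra hxF
  exact hx Fᶜ (hF.isOpen_compl.mem_nhds hxF) h

end Support

section DualSet

variable {d : ℕ} {S : Matrix (Fin d) (Fin d) ℝ}
  {ν : Measure (Fin d → ℝ)} {γ ρ : Measure ((Fin d → ℝ) × (Fin d → ℝ))}

/-- The pairs of the `y`-barycenter and the mean of `S(x,y) - S(x,x)/2`, over all probability
measures with bounded density with respect to `γ`. -/
def baryVal (S : Matrix (Fin d) (Fin d) ℝ) (γ : Measure ((Fin d → ℝ) × (Fin d → ℝ))) :
    Set ((Fin d → ℝ) × ℝ) :=
  {e | ∃ ρ : Measure ((Fin d → ℝ) × (Fin d → ℝ)), IsProbabilityMeasure ρ ∧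
    (∃ N : NNReal, ρ ≤ N • γ) ∧ e = (∫ p, p.2 ∂ρ, ∫ p, aff S p.1 p.2 ∂ρ)}

lemma MGamma.convex_baryVal (h : MGamma ν γ) (S : Matrix (Fin d) (Fin d) ℝ) :
    Convex ℝ (baryVal S γ) := by
  have := h.1
  rintro _ ⟨ρ₁, hρ₁, ⟨N₁, hN₁⟩, rfl⟩ _ ⟨ρ₂, hρ₂, ⟨N₂, hN₂⟩, rfl⟩ a b ha hb hab
  lift a to NNReal using ha
  lift b to NNReal using hb
  have hab' : a + b = 1 := by exact_mod_cast hab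
  have i1 := (h.memLp_snd.integrable one_le_two).of_measure_le_smul (c := N₁) (by simp) hN₁
  have i2 := (h.memLp_snd.integrable one_le_two).of_measure_le_smul (c := N₂) (by simp) hN₂
  have j1 := (h.integrable_aff S).of_measure_le_smul (c := N₁) (by simp) hN₁
  have j2 := (h.integrable_aff S).of_measure_le_smul (c := N₂) (by simp) hN₂
  refine ⟨a • ρ₁ + b • ρ₂, ⟨?_⟩, ⟨a * N₁ + b * N₂, ?_⟩, ?_⟩
  · simp only [Measure.add_apply, Measure.smul_apply, measure_univ, ENNReal.smul_def, smul_eq_mul,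
      mul_one]
    exact_mod_cast hab'
  · intro A
    have h1 := hN₁ A
    have h2 := hN₂ A
    simp only [Measure.add_apply, Measure.smul_apply, ENNReal.smul_def, smul_eq_mul] at h1 h2 ⊢
    push_cast
    rw [add_mul, mul_assoc, mul_assoc]
    gcongr
  · rw [integral_add_measure i1.smul_measure_nnreal i2.smul_measure_nnreal,
      integral_add_measure j1.smul_measure_nnreal j2.smul_measure_nnreal]
    simp only [integral_smul_nnreal_measure]
    rfl

/-- Strong duality: an optimal plan is supported on the graph of the projection on some maximal
`S`-monotone set, up to the membership of `x` in that set. -/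
lemma PrimalOpt.exists_dual (h : PrimalOpt S ν γ) (hS : S.IsHermitian) (hrank : IsUnit S.det) :
    ∃ M, MaxSMono S M ∧ ∀ p ∈ msupp γ, ∀ w ∈ M, aff S w p.2 ≤ aff S p.1 p.2 := by
  have hprob := h.1.1
  have hsub : baryVal S γ ⊆ epiQ S := by
    rintro _ ⟨ρ, hρ, ⟨N, hN⟩, rfl⟩
    exact h.le_integral_aff hS hN
  obtain ⟨C, hEC, hC⟩ := exists_maxConv (h.1.convex_baryVal S) hsub
  have hne : C.Nonempty := ⟨_, hEC ⟨γ, hprob, ⟨1, by simp⟩, rfl⟩⟩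
  refine ⟨contact S C, hC.maxSMono hS hrank hne, fun p hp w hw => ?_⟩
  by_contra! hlt
  -- the violation persists on a neighborhood `A`; test with `γ` conditioned on `A`
  set A : Set ((Fin d → ℝ) × (Fin d → ℝ)) := {q | aff S q.1 q.2 < aff S w q.2} with hA
  have hAo : IsOpen A := isOpen_lt (by fun_prop) (by fun_prop)
  have hA0 : γ A ≠ 0 := hp A (hAo.mem_nhds hlt)
  have hAt : γ A ≠ ⊤ := measure_ne_top _ _
  set N : NNReal := (γ A).toNNReal⁻¹ with hN
  have hNc : (N : ENNReal) = (γ A)⁻¹ := by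
    rw [hN, ENNReal.coe_inv (by simp [ENNReal.toNNReal_eq_zero_iff, hA0, hAt]),
      ENNReal.coe_toNNReal hAt]
  set ρ := N • γ.restrict A with hρ
  have hρp : IsProbabilityMeasure ρ := ⟨by
    rw [hρ, Measure.smul_apply, Measure.restrict_apply_univ, ENNReal.smul_def, hNc, smul_eq_mul,
      ENNReal.inv_mul_cancel hA0 hAt]⟩
  have hργ : ρ ≤ N • γ := by
    intro B
    simp only [hρ, Measure.smul_apply, ENNReal.smul_def, smul_eq_mul]
    gcongr
    exact Measure.restrict_le_self
  have hle := aff_le_of_mem_contact hS hC.1 hC.2.1 hw (hEC ⟨ρ, hρp, ⟨N, hργ⟩, rfl⟩)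
  have i2 : Integrable (fun q : (Fin d → ℝ) × (Fin d → ℝ) => q.2) ρ :=
    (h.1.memLp_snd.integrable one_le_two).of_measure_le_smul (c := N) (by simp) hργ
  have i3 : Integrable (fun q => aff S q.1 q.2) ρ :=
    (h.1.integrable_aff S).of_measure_le_smul (c := N) (by simp) hργ
  have i4 : Integrable (fun q : (Fin d → ℝ) × (Fin d → ℝ) => Sb S w q.2) ρ :=
    (SbL S w).integrable_comp i2
  have i5 : Integrable (fun q : (Fin d → ℝ) × (Fin d → ℝ) => aff S w q.2) ρ :=
    i4.sub (integrable_const _)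
  have e1 : aff S w (∫ q, q.2 ∂ρ) = ∫ q, aff S w q.2 ∂ρ := by
    unfold aff
    rw [integral_sub i4 (integrable_const _), integral_const, probReal_univ, one_smul]
    congr 1
    exact ((SbL S w).integral_comp_comm i2).symm
  rw [e1] at hle
  have hAρ : ∀ᵐ q ∂ρ, q ∈ A :=
    Measure.ae_smul_measure (ae_restrict_mem hAo.measurableSet) N
  have i6 : Integrable (fun q => aff S w q.2 - aff S q.1 q.2) ρ := i5.sub i3
  have hpos : 0 < ∫ q, (aff S w q.2 - aff S q.1 q.2) ∂ρ := by
    rw [integral_pos_iff_support_of_nonneg_ae (by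
      filter_upwards [hAρ] with q hq using sub_nonneg.2 (le_of_lt hq)) i6]
    have h1 : ρ univ ≤ ρ (Function.support fun q => aff S w q.2 - aff S q.1 q.2) :=
      measure_mono_ae (by
        filter_upwards [hAρ] with q hq _
        exact (sub_pos.2 hq).ne')
    rw [measure_univ] at h1
    exact zero_lt_one.trans_le h1
  rw [integral_sub i5 i3] at hpos
  linarith

end DualSet

/-! ### Extended integrals and the dual value -/

section ExtendedIntegral

variable {α : Type*} [MeasurableSpace α] {μ : Measure α}

lemma Measurable.epos {f : α → EReal} (hf : Measurable f) : Measurable fun a => epos (f a) :=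
  hf.ereal_toENNReal

lemma epos_coe (r : ℝ) : epos (r : EReal) = ENNReal.ofReal r := by
  rw [epos, if_neg (EReal.coe_ne_top r), EReal.toReal_coe]

lemma eInt_mono_ae {f g : α → EReal} (h : ∀ᵐ a ∂μ, f a ≤ g a) : eInt μ f ≤ eInt μ g := by
  refine EReal.sub_le_sub ?_ ?_ <;> rw [EReal.coe_ennreal_le_coe_ennreal_iff] <;>
    refine lintegral_mono_ae ?_ <;> filter_upwards [h] with a ha
  · exact EReal.toENNReal_le_toENNReal ha
  · exact EReal.toENNReal_le_toENNReal (EReal.neg_le_neg_iff.2 ha)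

lemma eInt_congr_ae {f g : α → EReal} (h : ∀ᵐ a ∂μ, f a = g a) : eInt μ f = eInt μ g :=
  (eInt_mono_ae (h.mono fun _ => le_of_eq)).antisymm (eInt_mono_ae (h.mono fun _ => ge_of_eq))

lemma eInt_coe {φ : α → ℝ} (h : Integrable φ μ) :
    eInt μ (fun a => (φ a : EReal)) = ((∫ a, φ a ∂μ : ℝ) : EReal) := by
  have hneg : ∫⁻ a, ENNReal.ofReal (-φ a) ∂μ ≠ ⊤ := h.neg.lintegral_lt_top.ne
  rw [integral_eq_lintegral_pos_part_sub_lintegral_neg_part h, EReal.coe_sub,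
    EReal.coe_ennreal_toReal h.lintegral_lt_top.ne, EReal.coe_ennreal_toReal hneg]
  simp only [eInt, epos_coe, ← EReal.coe_neg]

lemma eInt_map {β : Type*} [MeasurableSpace β] {g : α → β} (hg : Measurable g) {f : β → EReal}
    (hf : Measurable f) : eInt (μ.map g) f = eInt μ (fun a => f (g a)) := by
  have hfn : Measurable fun b => -f b := hf.neg
  unfold eInt
  rw [lintegral_map hf.epos hg, lintegral_map hfn.epos hg]

/-- A function with integrable lower bound and extended integral less than `⊤` is integrable. The
lower bound makes the negative part integrable, so that the junk value `⊤ - ⊤ = ⊥` does not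
occur. -/
lemma exists_integrable_of_eInt_ne_top {f : α → EReal} (hf : Measurable f) {ψ : α → ℝ}
    (hψ : Integrable ψ μ) (hle : ∀ a, (ψ a : EReal) ≤ f a) (h : eInt μ f ≠ ⊤) :
    ∃ φ : α → ℝ, Integrable φ μ ∧ ∀ᵐ a ∂μ, f a = φ a := by
  have hneg : ∫⁻ a, epos (-(f a)) ∂μ ≠ ⊤ := by
    refine ne_top_of_le_ne_top hψ.neg.lintegral_lt_top.ne (lintegral_mono fun a => ?_)
    rw [Pi.neg_apply, ← epos_coe, EReal.coe_neg]
    exact EReal.toENNReal_le_toENNReal (EReal.neg_le_neg_iff.2 (hle a))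
  have hpos : ∫⁻ a, epos (f a) ∂μ ≠ ⊤ := by
    intro hp
    apply h
    rw [eInt, hp, ← EReal.coe_ennreal_toReal hneg]
    rfl
  have hfin : ∀ᵐ a ∂μ, f a = ((f a).toReal : EReal) := by
    filter_upwards [ae_lt_top hf.ereal_toENNReal hpos] with a ha
    refine (EReal.coe_toReal (fun ht => ?_) (fun hb => ?_)).symm
    · rw [ht] at ha; simp at ha
    · have := hle a; rw [hb] at this; simp at this
  refine ⟨fun a => (f a).toReal, ⟨hf.ereal_toReal.aestronglyMeasurable, ?_⟩, hfin⟩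
  have hle2 : ∫⁻ a, ‖(f a).toReal‖ₑ ∂μ ≤ ∫⁻ a, (epos (f a) + epos (-(f a))) ∂μ := by
    refine lintegral_mono_ae ?_
    filter_upwards [hfin] with a ha
    generalize (f a).toReal = r at ha
    rw [ha, ← EReal.coe_neg, epos_coe, epos_coe, Real.enorm_eq_ofReal_abs]
    rcases abs_cases r with ⟨h1, -⟩ | ⟨h1, -⟩ <;> rw [h1]
    · exact le_self_add
    · exact le_add_self
  refine hle2.trans_lt ?_
  rw [lintegral_add_left hf.epos]
  exact ENNReal.add_lt_top.2 ⟨hpos.lt_top, hneg.lt_top⟩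

end ExtendedIntegral

section DualValue

variable {d : ℕ} {S : Matrix (Fin d) (Fin d) ℝ} {G : Set (Fin d → ℝ)}
  {ν : Measure (Fin d → ℝ)} {γ : Measure ((Fin d → ℝ) × (Fin d → ℝ))}

lemma measurable_fitz : Measurable (fitz S G) := by
  refine LowerSemicontinuous.measurable (lowerSemicontinuous_biSup fun z _ => ?_)
  exact (continuous_coe_real_ereal.comp (by fun_prop)).lowerSemicontinuous

lemma aff_le_fitz {z : Fin d → ℝ} (hz : z ∈ G) (y : Fin d → ℝ) : (aff S z y : EReal) ≤ fitz S G y :=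
  le_iSup₂ (f := fun z (_ : z ∈ G) => ((Sb S z y - Sb S z z / 2 : ℝ) : EReal)) z hz

lemma fitz_le {y : Fin d → ℝ} {r : ℝ} (h : ∀ z ∈ G, aff S z y ≤ r) : fitz S G y ≤ r :=
  iSup₂_le fun z hz => EReal.coe_le_coe_iff.2 (h z hz)

lemma MGamma.eInt_fitz (h : MGamma ν γ) :
    eInt ν (fitz S G) = eInt γ (fun p => fitz S G p.2) := by
  rw [← h.2.1, eInt_map measurable_snd measurable_fitz]

lemma MGamma.eInt_fitz_le (h : MGamma ν γ)
    (hle : ∀ᵐ p ∂γ, ∀ z ∈ G, aff S z p.2 ≤ aff S p.1 p.2) :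
    eInt ν (fitz S G) ≤ (primalVal S γ : EReal) := by
  rw [h.eInt_fitz, h.primalVal_eq_aff, ← eInt_coe (h.integrable_aff S)]
  exact eInt_mono_ae (hle.mono fun p hp => fitz_le hp)

lemma MGamma.exists_integrable_fitz (h : MGamma ν γ) (hne : G.Nonempty)
    (ht : eInt ν (fitz S G) ≠ ⊤) :
    ∃ φ : (Fin d → ℝ) × (Fin d → ℝ) → ℝ, Integrable φ γ ∧
      (∀ᵐ p ∂γ, ∀ z ∈ G, aff S z p.2 ≤ φ p) ∧ eInt ν (fitz S G) = ((∫ p, φ p ∂γ : ℝ) : EReal) := by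
  have := h.1
  obtain ⟨z, hz⟩ := hne
  rw [h.eInt_fitz] at ht ⊢
  have i : Integrable (fun p => aff S z p.2) γ :=
    ((memLp_const z).integrable_Sb h.memLp_snd S).sub (integrable_const _)
  obtain ⟨φ, hφ, he⟩ := exists_integrable_of_eInt_ne_top (measurable_fitz.comp measurable_snd) i
    (fun p => aff_le_fitz hz p.2) ht
  refine ⟨φ, hφ, ?_, ?_⟩
  · filter_upwards [he] with p hp w hw
    rw [← EReal.coe_le_coe_iff, ← hp]
    exact aff_le_fitz hw _
  · rw [← eInt_coe hφ]
    exact eInt_congr_ae he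

end DualValue

/-! ### Weak duality -/

section WeakDuality

variable {d : ℕ} {S : Matrix (Fin d) (Fin d) ℝ} {G : Set (Fin d → ℝ)}
  {ν : Measure (Fin d → ℝ)} {γ : Measure ((Fin d → ℝ) × (Fin d → ℝ))}

/-- The maximizer of `k ↦ aff S (z k) x` among `z 0, …, z n`, with ties broken by the smallest
index. -/
def sel (S : Matrix (Fin d) (Fin d) ℝ) (z : ℕ → Fin d → ℝ) : ℕ → (Fin d → ℝ) → Fin d → ℝ
  | 0, _ => z 0
  | n + 1, x => if aff S (sel S z n x) x < aff S (z (n + 1)) x then z (n + 1) else sel S z n x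

lemma measurable_sel (z : ℕ → Fin d → ℝ) (n : ℕ) : Measurable (sel S z n) := by
  induction n with
  | zero => exact measurable_const
  | succ n ih =>
    have haff : Measurable fun x => aff S (sel S z n x) x := by
      have hc : Continuous fun p : (Fin d → ℝ) × (Fin d → ℝ) => aff S p.1 p.2 := by fun_prop
      exact hc.measurable.comp (ih.prodMk measurable_id)
    exact Measurable.ite (measurableSet_lt haff
      (Continuous.measurable (by fun_prop))) measurable_const ih

lemma sel_mem {z : ℕ → Fin d → ℝ} (hz : ∀ n, z n ∈ G) (n : ℕ) (x : Fin d → ℝ) :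
    sel S z n x ∈ G := by
  induction n with
  | zero => exact hz 0
  | succ n ih =>
    rw [sel]; split_ifs
    exacts [hz _, ih]

lemma exists_norm_sel_le (z : ℕ → Fin d → ℝ) (n : ℕ) : ∃ C, ∀ x, ‖sel S z n x‖ ≤ C := by
  induction n with
  | zero => exact ⟨‖z 0‖, fun _ => le_rfl⟩
  | succ n ih =>
    obtain ⟨C, hC⟩ := ih
    refine ⟨max C ‖z (n + 1)‖, fun x => ?_⟩
    rw [sel]; split_ifs
    exacts [le_max_right _ _, (hC x).trans (le_max_left _ _)]

lemma aff_sel_le_succ (z : ℕ → Fin d → ℝ) (n : ℕ) (x : Fin d → ℝ) :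
    aff S (sel S z n x) x ≤ aff S (sel S z (n + 1) x) x := by
  rw [sel]; split_ifs with h
  exacts [h.le, le_rfl]

lemma aff_le_aff_sel (z : ℕ → Fin d → ℝ) (n : ℕ) (x : Fin d → ℝ) :
    aff S (z n) x ≤ aff S (sel S z n x) x := by
  cases n with
  | zero => exact le_rfl
  | succ n =>
    rw [sel]; split_ifs with h
    exacts [le_rfl, not_lt.1 h]

/-- Weak duality for an integrable majorant `φ` of the Fitzpatrick function, with its equality
case. Selecting near-maximizers of `z ↦ aff S z x` as functions of `x` and using the martingale
property gives `∫ φ ≥ ∫ ψ_G(x) dγ`, and the maximality of `G` gives `ψ_G(x) ≥ S(x,x)/2` with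
equality exactly on `G`. -/
lemma MaxSMono.weak_duality (hG : MaxSMono S G) (hS : S.IsHermitian) (h : MGamma ν γ)
    {φ : (Fin d → ℝ) × (Fin d → ℝ) → ℝ} (hφ : Integrable φ γ)
    (hle : ∀ᵐ p ∂γ, ∀ z ∈ G, aff S z p.2 ≤ φ p) :
    primalVal S γ ≤ ∫ p, φ p ∂γ ∧ (∫ p, φ p ∂γ ≤ primalVal S γ → ∀ᵐ p ∂γ, p.1 ∈ G) := by
  have := h.1
  have : Nonempty G := hG.nonempty.to_subtype
  set z : ℕ → Fin d → ℝ := fun n => TopologicalSpace.denseSeq G n with hz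
  have hzG : ∀ n, z n ∈ G := fun n => (TopologicalSpace.denseSeq G n).2
  have hdense {x : Fin d → ℝ} {r : ℝ} (hr : ∀ n, aff S (z n) x ≤ r) :
      ∀ w ∈ G, aff S w x ≤ r := by
    intro w hw
    have hc : Continuous fun g : G => aff S (g : Fin d → ℝ) x := by fun_prop
    exact (TopologicalSpace.denseRange_denseSeq G).induction_on
      (p := fun g : G => aff S (g : Fin d → ℝ) x ≤ r) ⟨w, hw⟩ (isClosed_le hc continuous_const) hr
  set q : (Fin d → ℝ) × (Fin d → ℝ) → ℝ := fun p => Sb S p.1 p.1 / 2 with hq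
  have iq : Integrable q γ := (h.memLp_fst.integrable_Sb h.memLp_fst S).div_const 2
  have hprim : primalVal S γ = ∫ p, q p ∂γ := h.primalVal_eq S
  set Z : ℕ → (Fin d → ℝ) × (Fin d → ℝ) → Fin d → ℝ := fun n p => sel S z n p.1 with hZ
  have hZm (n : ℕ) : StronglyMeasurable[sigX d] (Z n) :=
    ((measurable_sel z n).comp (comap_measurable Prod.fst)).stronglyMeasurable
  have hZ2 (n : ℕ) : MemLp (Z n) 2 γ := by
    obtain ⟨C, hC⟩ := exists_norm_sel_le (S := S) z n
    exact MemLp.of_bound ((hZm n).mono (sigX_le d)).aestronglyMeasurable C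
      (ae_of_all _ fun p => hC p.1)
  set ψ : ℕ → (Fin d → ℝ) × (Fin d → ℝ) → ℝ := fun n p => aff S (Z n p) p.1 with hψ
  have iZ (n : ℕ) : Integrable (fun p => Sb S (Z n p) (Z n p) / 2) γ :=
    ((hZ2 n).integrable_Sb (hZ2 n) S).div_const 2
  have i1 (n : ℕ) : Integrable (fun p => Sb S (Z n p) p.1) γ := (hZ2 n).integrable_Sb h.memLp_fst S
  have i2 (n : ℕ) : Integrable (fun p => Sb S (Z n p) p.2) γ := (hZ2 n).integrable_Sb h.memLp_snd S
  have iψ (n : ℕ) : Integrable (ψ n) γ := (i1 n).sub (iZ n)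
  have hψφ (n : ℕ) : ∫ p, ψ n p ∂γ ≤ ∫ p, φ p ∂γ := by
    have e : ∫ p, ψ n p ∂γ = ∫ p, aff S (Z n p) p.2 ∂γ := by
      simp only [hψ, aff]
      rw [integral_sub (i1 n) (iZ n), integral_sub (i2 n) (iZ n), h.integral_Sb (hZm n) (hZ2 n)]
    rw [e]
    refine integral_mono_ae ((i2 n).sub (iZ n)) hφ ?_
    filter_upwards [hle] with p hp
    exact hp _ (sel_mem hzG n p.1)
  have hmono (p) : Monotone fun n => ψ n p := monotone_nat_of_le_succ fun n =>
    aff_sel_le_succ z n p.1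
  -- truncation keeps the supremum finite without affecting the comparison with `q`
  set F : ℕ → (Fin d → ℝ) × (Fin d → ℝ) → ℝ := fun n p => min (ψ n p) (q p + 1) with hF
  have hFmono (p) : Monotone fun n => F n p := fun i j hij => min_le_min_right _ (hmono p hij)
  have hFbdd (p) : BddAbove (range fun n => F n p) :=
    ⟨q p + 1, by rintro _ ⟨n, rfl⟩; exact min_le_right _ _⟩
  set b : (Fin d → ℝ) × (Fin d → ℝ) → ℝ := fun p => ⨆ n, F n p with hb
  have hlim (p) : Tendsto (fun n => F n p) atTop (nhds (b p)) :=
    tendsto_atTop_ciSup (hFmono p) (hFbdd p)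
  have iF (n : ℕ) : Integrable (F n) γ := (iψ n).inf (iq.add (integrable_const 1))
  have hFb (n : ℕ) (p) : F n p ≤ b p := le_ciSup (hFbdd p) n
  have hbq (p) : b p ≤ q p + 1 := ciSup_le fun n => min_le_right _ _
  have hbound (n : ℕ) (p) : ‖F n p‖ ≤ |F 0 p| + |q p + 1| := by
    have h1 : F 0 p ≤ F n p := hFmono p (Nat.zero_le n)
    have h2 : F n p ≤ q p + 1 := min_le_right _ _
    rw [Real.norm_eq_abs, abs_le]
    constructor
    · linarith [neg_abs_le (F 0 p), abs_nonneg (q p + 1)]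
    · linarith [le_abs_self (q p + 1), abs_nonneg (F 0 p)]
  have ibd : Integrable (fun p => |F 0 p| + |q p + 1|) γ :=
    (iF 0).abs.add (iq.add (integrable_const 1)).abs
  have hconv : Tendsto (fun n => ∫ p, F n p ∂γ) atTop (nhds (∫ p, b p ∂γ)) :=
    tendsto_integral_of_dominated_convergence _ (fun n => (iF n).1) ibd
      (fun n => ae_of_all _ (hbound n)) (ae_of_all _ hlim)
  have ib : Integrable b γ :=
    ibd.mono' (aestronglyMeasurable_of_tendsto_ae atTop (fun n => (iF n).1) (ae_of_all _ hlim))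
      (ae_of_all _ fun p => le_of_tendsto (hlim p).norm (Eventually.of_forall fun n => hbound n p))
  have hbφ : ∫ p, b p ∂γ ≤ ∫ p, φ p ∂γ := by
    refine le_of_tendsto hconv (Eventually.of_forall fun n => ?_)
    exact (integral_mono (iF n) (iψ n) fun p => min_le_left _ _).trans (hψφ n)
  have hmemG (p) {r : ℝ} (hr : r < q p + 1) (hbr : b p ≤ r) : ∀ w ∈ G, aff S w p.1 ≤ r := by
    refine hdense fun n => (aff_le_aff_sel z n p.1).trans ?_
    have h1 := (hFb n p).trans hbr
    rcases min_le_iff.1 h1 with h2 | h2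
    · exact h2
    · linarith
  have hqb (p) : q p ≤ b p := by
    by_contra! hlt
    have h1 := hmemG p (by linarith) le_rfl
    have h2 : p.1 ∈ G := (hG.mem_iff hS p.1).2 fun w hw => (h1 w hw).trans hlt.le
    have h3 := h1 _ h2
    have h4 : aff S p.1 p.1 = q p := by simp only [aff, hq]; ring
    linarith
  rw [hprim]
  refine ⟨(integral_mono iq ib hqb).trans hbφ, fun hφq => ?_⟩
  have h0 : ∫ p, (b p - q p) ∂γ = 0 := by
    rw [integral_sub ib iq]
    linarith [integral_mono iq ib hqb]
  have h1 := (integral_eq_zero_iff_of_nonneg (fun p => sub_nonneg.2 (hqb p)) (ib.sub iq)).1 h0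
  filter_upwards [h1] with p hp
  have hp' : b p = q p := sub_eq_zero.1 hp
  exact (hG.mem_iff hS p.1).2 (hmemG p (lt_add_one _) hp'.le)

end WeakDuality

/-! ### The projection graph and the equality case -/

section Closed

variable {d : ℕ} {S : Matrix (Fin d) (Fin d) ℝ} {G : Set (Fin d → ℝ)}
  {ν : Measure (Fin d → ℝ)} {γ : Measure ((Fin d → ℝ) × (Fin d → ℝ))}

/-- Both conditions defining `x ∈ P_G(y)`, including `x ∈ G`, are closed conditions indexed by
`z ∈ G`. -/
lemma isClosed_projGraph (hS : S.IsHermitian) (hG : MaxSMono S G) :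
    IsClosed {p : (Fin d → ℝ) × (Fin d → ℝ) | p.1 ∈ SProj S G p.2} := by
  have e : {p : (Fin d → ℝ) × (Fin d → ℝ) | p.1 ∈ SProj S G p.2} =
      ⋂ z ∈ G, {p | aff S z p.1 ≤ Sb S p.1 p.1 / 2 ∧ aff S z p.2 ≤ aff S p.1 p.2} := by
    ext p
    simp only [mem_ofPred_eq, mem_SProj_iff hS, hG.mem_iff hS p.1, mem_iInter₂, forall_and]
  rw [e]
  refine isClosed_biInter fun z _ => ?_
  rw [ofPred_and]
  exact (isClosed_le (by fun_prop) (by fun_prop)).inter (isClosed_le (by fun_prop) (by fun_prop))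

/-- Weak duality between the primal and the dual problem. -/
lemma MGamma.primalVal_le_eInt (h : MGamma ν γ) (hS : S.IsHermitian) (hG : MaxSMono S G) :
    (primalVal S γ : EReal) ≤ eInt ν (fitz S G) := by
  by_cases ht : eInt ν (fitz S G) = ⊤
  · rw [ht]; exact le_top
  obtain ⟨φ, hφ, hle, he⟩ := h.exists_integrable_fitz hG.nonempty ht
  rw [he, EReal.coe_le_coe_iff]
  exact (hG.weak_duality hS h hφ hle).1

/-- If the dual value of `G` does not exceed the primal value of `γ`, then all the inequalities in
the proof of weak duality are equalities, and `x ∈ P_G(y)` almost surely. -/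
lemma MGamma.mem_SProj_of_eInt_le (h : MGamma ν γ) (hS : S.IsHermitian) (hG : MaxSMono S G)
    (hle : eInt ν (fitz S G) ≤ (primalVal S γ : EReal)) :
    ∀ᵐ p ∂γ, p.1 ∈ SProj S G p.2 := by
  obtain ⟨φ, hφ, hφle, he⟩ := h.exists_integrable_fitz hG.nonempty
    (ne_top_of_le_ne_top (EReal.coe_ne_top _) hle)
  rw [he, EReal.coe_le_coe_iff] at hle
  have hmem := (hG.weak_duality hS h hφ hφle).2 hle
  have i := h.integrable_aff S
  have hnn : 0 ≤ᵐ[γ] fun p => φ p - aff S p.1 p.2 := by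
    filter_upwards [hmem, hφle] with p h1 h2 using sub_nonneg.2 (h2 _ h1)
  have h0 : ∫ p, (φ p - aff S p.1 p.2) ∂γ = 0 := by
    refine le_antisymm ?_ (integral_nonneg_of_ae hnn)
    rw [integral_sub hφ i, ← h.primalVal_eq_aff]
    linarith
  have h1 := (integral_eq_zero_iff_of_nonneg_ae hnn (hφ.sub i)).1 h0
  filter_upwards [hmem, hφle, h1] with p hp hp2 hp3
  have hp4 : φ p = aff S p.1 p.2 := sub_eq_zero.1 hp3
  exact (mem_SProj_iff hS).2 ⟨hp, fun z hz => hp4 ▸ hp2 z hz⟩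

end Closed

/-- Theorem 1, equivalence (a) ⇔ (b): for `γ ∈ Γ(ν)` and a maximal
`S`-monotone set `G`, `γ` and `G` are optimal for the primal and dual problems if and
only if `x ∈ P_G(y)` for every `(x,y)` in the support of `γ`. -/
theorem primal_dual_optimal_iff_support_in_projection_graph
    (d m : ℕ) (S : Matrix (Fin d) (Fin d) ℝ) (hS : S.IsHermitian)
    (hrank : IsUnit S.det)
    (hm : Nat.card {i : Fin d // 0 < hS.eigenvalues i} = m)
    (ν : Measure (Fin d → ℝ)) [IsProbabilityMeasure ν]
    (hν : Integrable (fun y => ‖y‖ ^ 2) ν)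
    (γ : Measure ((Fin d → ℝ) × (Fin d → ℝ))) (hγ : MGamma ν γ)
    (G : Set (Fin d → ℝ)) (hG : MaxSMono S G) :
    (PrimalOpt S ν γ ∧ DualOpt S ν G) ↔
      ∀ p ∈ msupp γ, p.1 ∈ SProj S G p.2 := by
  constructor
  · rintro ⟨hP, hD⟩
    obtain ⟨M, hM, hsupp⟩ := hP.exists_dual hS hrank
    have hval : eInt ν (fitz S G) ≤ (primalVal S γ : EReal) :=
      (hD.2 M hM).trans (hγ.eInt_fitz_le ((ae_mem_msupp γ).mono hsupp))
    exact msupp_subset_of_isClosed (isClosed_projGraph hS hG)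
      (hγ.mem_SProj_of_eInt_le hS hG hval)
  · intro hsupp
    have hval : eInt ν (fitz S G) ≤ (primalVal S γ : EReal) := hγ.eInt_fitz_le <| by
      filter_upwards [ae_mem_msupp γ] with p hp
      exact ((mem_SProj_iff hS).1 (hsupp p hp)).2
    refine ⟨⟨hγ, fun γ' hγ' => ?_⟩, hG, fun H hH => ?_⟩
    · exact EReal.coe_le_coe_iff.1 ((hγ'.primalVal_le_eInt hS hG).trans hval)
    · exact hval.trans (hγ.primalVal_le_eInt hS hH)

end
end

section
/- Let S be a real symmetric d×d matrix of full rank with exactly m positive eigenvalues, ν a Borel probability measure on ℝ^d with finite second moment, γ ∈ Γ(ν), and G a maximal S-monotone set. Then the following are equivalent: (i) for every (x,y) in the support of γ, x ∈ P_G(y); (ii) γ-almost surely, x ∈ G and y ∈ Q_G(x). -/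
/-!
Write `K x = P_G⁻¹(x)`. Expanding the quadratic form around `x` shows that `y ∈ K x` amounts to a
family of affine inequalities in `y` indexed by `G`, so `K x` is closed and convex. Moreover a
maximal `S`-monotone set is closed, hence so is the graph `{(x, y) | x ∈ P_G(y)}`; therefore (i)
just says that `y ∈ K x` for `γ`-almost every `(x, y)`, and (ii) implies (i) because
`Q_G(x) ⊆ K x`.

For the converse, disintegrate `γ` with respect to its first coordinate. By the martingale property
the conditional law `μ` of `y` given `x` has barycenter `x`, and it is carried by the closed convex
set `K x`. The barycenter of `μ` lies in the relative interior of the closed convex hull `C` of the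
support of `μ`: a linear functional that is maximal on `C` at the barycenter is `μ`-almost surely
equal to its mean, hence constant on `C` (`ae_exists_extend_of_barycenter`). So
each segment from a point `y ∈ C` to `x` can be extended beyond `x` inside `C ⊆ K x`
(`Convex.exists_extend_of_forall_functional`), which means that `y ∈ Q_G(x)`.
-/

open MeasureTheory Filter Set Matrix

noncomputable section

/-! ### Extending segments beyond a relative interior point -/

/-- Supporting hyperplane criterion for relative interior points, in finite dimension: if every
linear functional that attains its maximum over the convex set `C` at `x ∈ C` is constant on `C`,
then every segment from a point of `C` to `x` can be prolonged beyond `x` inside `C`. -/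
theorem Convex.exists_extend_of_forall_functional {E : Type*} [NormedAddCommGroup E]
    [NormedSpace ℝ E] [FiniteDimensional ℝ E] {C : Set E} (hC : Convex ℝ C) {x : E} (hx : x ∈ C)
    (h : ∀ f : E →L[ℝ] ℝ, (∀ y ∈ C, f y ≤ f x) → ∀ y ∈ C, f y = f x) {y : E} (hy : y ∈ C) :
    ∃ n : ℕ, x + ((1 : ℝ) / (n + 1)) • (x - y) ∈ C := by
  set D : Set E := (fun v => x + v) ⁻¹' C with hD
  have hDconv : Convex ℝ D := hC.translate_preimage_right x
  have h0D : (0 : E) ∈ D := by simpa [hD] using hx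
  -- Work inside the linear span `V` of `C - x`, where the translate of `C` has nonempty interior.
  set V : Submodule ℝ E := Submodule.span ℝ D with hV
  set T : Set V := ((↑) : V → E) ⁻¹' D with hT
  have hTconv : Convex ℝ T := hDconv.linear_preimage V.subtype
  have h0T : (0 : V) ∈ T := by simpa [hT] using h0D
  have hspan : affineSpan ℝ T = ⊤ := by
    have h1 := affineSpan_insert_zero (k := ℝ) T
    rw [Set.insert_eq_of_mem h0T, Submodule.span_span_coe_preimage] at h1
    exact SetLike.coe_injective (by rw [h1]; rfl)
  have hint : (interior T).Nonempty := hTconv.interior_nonempty_iff_affineSpan_eq_top.2 hspan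
  have h0int : (0 : V) ∈ interior T := by
    by_contra hcon
    obtain ⟨f, hf⟩ := geometric_hahn_banach_open_point hTconv.interior isOpen_interior hcon
    rw [map_zero] at hf
    have hle : ∀ v ∈ T, f v ≤ 0 := by
      intro v hv
      have hcl : closure (interior T) ⊆ {v | f v ≤ 0} :=
        closure_minimal (fun v hv => (hf v hv).le) (isClosed_le f.continuous continuous_const)
      rw [hTconv.closure_interior_eq_closure_of_nonempty_interior hint] at hcl
      exact hcl (subset_closure hv)
    obtain ⟨g, hg⟩ := LinearMap.exists_extend (f : V →ₗ[ℝ] ℝ)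
    have hgf : ∀ v : V, g v = f v := fun v => LinearMap.congr_fun hg v
    have hmem : ∀ z ∈ C, z - x ∈ D := fun z hz => by simpa [hD] using hz
    have key : ∀ z (hz : z ∈ C),
        g z - g x = f ⟨z - x, Submodule.subset_span (hmem z hz)⟩ := fun z hz => by
      rw [← map_sub, ← hgf]
    have hconst := h (LinearMap.toContinuousLinearMap g) (fun z hz => by
      have h1 := hle ⟨z - x, Submodule.subset_span (hmem z hz)⟩ (hmem z hz)
      rw [← key z hz] at h1
      simpa using h1)
    obtain ⟨v, hv⟩ := hint
    have hvT : v ∈ T := interior_subset hv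
    have hvC : x + (v : E) ∈ C := hvT
    have h1 := hf v hv
    have h2 : g (x + v) = g x := hconst _ hvC
    rw [map_add, hgf] at h2
    linarith
  have hyD : y - x ∈ D := by simpa [hD] using hy
  set w : V := ⟨x - y, by
    rw [← neg_sub]; exact V.neg_mem (Submodule.subset_span hyD)⟩ with hw
  have hlim : Tendsto (fun n : ℕ => ((1 : ℝ) / (n + 1)) • w) atTop (nhds 0) := by
    simpa using (tendsto_one_div_add_atTop_nhds_zero_nat (𝕜 := ℝ)).smul_const w
  obtain ⟨n, hn⟩ := (hlim.eventually (mem_interior_iff_mem_nhds.1 h0int)).exists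
  exact ⟨n, hn⟩

/-- The barycenter `x` of a probability measure carried by a closed convex set `K` is in relatively
interior position: almost every segment from `y` to `x` can be prolonged beyond `x` inside `K`. -/
theorem ae_exists_extend_of_barycenter {E : Type*} [NormedAddCommGroup E]
    [NormedSpace ℝ E] [FiniteDimensional ℝ E] [MeasurableSpace E] [BorelSpace E]
    (μ : Measure E) [IsProbabilityMeasure μ] {K : Set E} (hK : Convex ℝ K) (hKc : IsClosed K)
    (hμK : ∀ᵐ y ∂μ, y ∈ K) (hint : Integrable (fun y => y) μ) {x : E} (hx : ∫ y, y ∂μ = x) :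
    ∀ᵐ y ∂μ, ∃ n : ℕ, x + ((1 : ℝ) / (n + 1)) • (x - y) ∈ K := by
  have := FiniteDimensional.proper_real E
  set C : Set E := closure (convexHull ℝ μ.support) with hC
  have hCconv : Convex ℝ C := (convex_convexHull ℝ _).closure
  have hsub : μ.support ⊆ C := (subset_convexHull ℝ _).trans subset_closure
  have hmin : ∀ K' : Set E, Convex ℝ K' → IsClosed K' → (∀ᵐ y ∂μ, y ∈ K') → C ⊆ K' :=
    fun K' h1 h2 h3 =>
      closure_minimal (convexHull_min (Measure.support_subset_of_isClosed h2 h3) h1) h2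
  have hμC : ∀ᵐ y ∂μ, y ∈ C := by
    filter_upwards [Measure.support_mem_ae (μ := μ)] with y hy using hsub hy
  have hxC : x ∈ C := hx ▸ hCconv.integral_mem isClosed_closure hμC hint
  have hfun : ∀ f : E →L[ℝ] ℝ, (∀ y ∈ C, f y ≤ f x) → ∀ y ∈ C, f y = f x := by
    intro f hf
    have hfint : Integrable (fun y => f y) μ := f.integrable_comp hint
    have hmean : ∫ y, (f x - f y) ∂μ = 0 := by
      rw [integral_sub (integrable_const _) hfint, f.integral_comp_comm hint, hx]
      simp
    have hzero := (integral_eq_zero_iff_of_nonneg_ae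
      (by filter_upwards [hμC] with y hy using sub_nonneg.2 (hf y hy))
      ((integrable_const _).sub hfint)).1 hmean
    have hconv : Convex ℝ {y | f y = f x} :=
      convex_hyperplane f.toLinearMap.isLinear (f x)
    refine hmin _ hconv (isClosed_eq f.continuous continuous_const) ?_
    filter_upwards [hzero] with y hy
    exact (sub_eq_zero.1 hy).symm
  filter_upwards [hμC] with y hy
  obtain ⟨n, hn⟩ := hCconv.exists_extend_of_forall_functional hxC hfun hy
  exact ⟨n, hmin K hK hKc hμK hn⟩

/-! ### Maximal `S`-monotone sets and their projections -/

theorem Sb_continuous {d : ℕ} (S : Matrix (Fin d) (Fin d) ℝ) :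
    Continuous fun p : (Fin d → ℝ) × (Fin d → ℝ) => Sb S p.1 p.2 := by
  unfold Sb
  fun_prop

/-- The closure of an `S`-monotone set is `S`-monotone, so a maximal one is closed. -/
theorem MaxSMono.isClosed {d : ℕ} {S : Matrix (Fin d) (Fin d) ℝ} {G : Set (Fin d → ℝ)}
    (hG : MaxSMono S G) : IsClosed G := by
  have hcont : Continuous fun p : (Fin d → ℝ) × (Fin d → ℝ) => Sb S (p.1 - p.2) (p.1 - p.2) :=
    (Sb_continuous S).comp (by fun_prop : Continuous fun p : (Fin d → ℝ) × (Fin d → ℝ) =>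
      (p.1 - p.2, p.1 - p.2))
  have hmono : SMono S (closure G) := by
    intro x hx y hy
    have hsub : closure (G ×ˢ G) ⊆
        {p : (Fin d → ℝ) × (Fin d → ℝ) | 0 ≤ Sb S (p.1 - p.2) (p.1 - p.2)} :=
      closure_minimal (fun p hp => hG.1 _ hp.1 _ hp.2) (isClosed_le continuous_const hcont)
    rw [closure_prod_eq] at hsub
    exact hsub (Set.mk_mem_prod hx hy)
  exact closure_eq_iff_isClosed.1 (hG.2 _ hmono subset_closure)

/-- The graph of the `S`-projection on a closed set is closed. -/
theorem isClosed_graph_SProj {d : ℕ} (S : Matrix (Fin d) (Fin d) ℝ) {G : Set (Fin d → ℝ)}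
    (hG : IsClosed G) :
    IsClosed {p : (Fin d → ℝ) × (Fin d → ℝ) | p.1 ∈ SProj S G p.2} := by
  have hcont : ∀ g : (Fin d → ℝ) × (Fin d → ℝ) → (Fin d → ℝ), Continuous g →
      Continuous fun p => Sb S (g p) (g p) :=
    fun g hg => (Sb_continuous S).comp (hg.prodMk hg)
  have heq : {p : (Fin d → ℝ) × (Fin d → ℝ) | p.1 ∈ SProj S G p.2} = Prod.fst ⁻¹' G ∩
      ⋂ z, ⋂ _ : z ∈ G, {p : (Fin d → ℝ) × (Fin d → ℝ) |
        Sb S (p.1 - p.2) (p.1 - p.2) ≤ Sb S (z - p.2) (z - p.2)} := by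
    ext p
    simp [SProj]
  rw [heq]
  exact (hG.preimage continuous_fst).inter <| isClosed_iInter fun z => isClosed_iInter fun _ =>
    isClosed_le (hcont (fun p => p.1 - p.2) (by fun_prop)) (hcont (fun p => z - p.2) (by fun_prop))

/-- The quadratic terms in `y` cancel in the inequalities defining `P_G⁻¹(x)`, which is therefore
an intersection of half-spaces. -/
theorem convex_SProjInv {d : ℕ} (S : Matrix (Fin d) (Fin d) ℝ) (G : Set (Fin d → ℝ))
    (x : Fin d → ℝ) : Convex ℝ (SProjInv S G x) := by
  have key : ∀ z y : Fin d → ℝ, (Sb S (x - y) (x - y) ≤ Sb S (z - y) (z - y)) ↔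
      Sb S (z - x) y + Sb S y (z - x) ≤ Sb S z z - Sb S x x := by
    intro z y
    simp only [Sb, Matrix.mulVec_sub, dotProduct_sub, sub_dotProduct]
    constructor <;> intro h <;> linarith
  rintro y ⟨hxG, hy⟩ y' ⟨-, hy'⟩ a b ha hb hab
  refine ⟨hxG, fun z hz => (key z _).2 ?_⟩
  have h1 := mul_le_mul_of_nonneg_left ((key z y).1 (hy z hz)) ha
  have h2 := mul_le_mul_of_nonneg_left ((key z y').1 (hy' z hz)) hb
  have h3 : (a + b) * (Sb S z z - Sb S x x) = Sb S z z - Sb S x x := by rw [hab, one_mul]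
  have h4 : ∀ u : Fin d → ℝ,
      Sb S u (a • y + b • y') + Sb S (a • y + b • y') u
        = a * (Sb S u y + Sb S y u) + b * (Sb S u y' + Sb S y' u) := by
    intro u
    simp only [Sb, Matrix.mulVec_add, Matrix.mulVec_smul, dotProduct_add, add_dotProduct,
      dotProduct_smul, smul_dotProduct, smul_eq_mul]
    ring
  rw [h4]
  linarith

theorem measurableSet_graph_QG {d : ℕ} (S : Matrix (Fin d) (Fin d) ℝ) {G : Set (Fin d → ℝ)}
    (hG : IsClosed G) :
    MeasurableSet {p : (Fin d → ℝ) × (Fin d → ℝ) | p.1 ∈ G ∧ p.2 ∈ QG S G p.1} := by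
  have hP := isClosed_graph_SProj S hG
  have hn : ∀ n : ℕ, MeasurableSet {p : (Fin d → ℝ) × (Fin d → ℝ) |
      p.1 ∈ SProj S G (p.1 + ((1 : ℝ) / (n + 1)) • (p.1 - p.2))} := fun n =>
    (hP.preimage (by fun_prop : Continuous fun p : (Fin d → ℝ) × (Fin d → ℝ) =>
      (p.1, p.1 + ((1 : ℝ) / (n + 1)) • (p.1 - p.2)))).measurableSet
  simp only [QG, SProjInv, Set.mem_iUnion, Set.mem_ofPred_eq, Set.ofPred_and, Set.ofPred_exists]
  exact (hG.preimage continuous_fst).measurableSet.inter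
    (MeasurableSet.iUnion fun n => hP.measurableSet.inter (hn n))

/-! ### Disintegration -/

/-- Under the martingale property, the conditional law of `y` given `x` is integrable with
barycenter `x`, for almost every `x`. -/
theorem MGamma.ae_condDistrib {d : ℕ} {ν : Measure (Fin d → ℝ)}
    {γ : Measure ((Fin d → ℝ) × (Fin d → ℝ))} [IsFiniteMeasure γ] (hγ : MGamma ν γ) :
    ∀ᵐ x ∂γ.map Prod.fst,
      Integrable (fun y => y) (ProbabilityTheory.condDistrib Prod.snd Prod.fst γ x) ∧
        ∫ y, y ∂(ProbabilityTheory.condDistrib Prod.snd Prod.fst γ x) = x := by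
  obtain ⟨-, -, hint, hmart⟩ := hγ
  have hsnd : Integrable (fun p : (Fin d → ℝ) × (Fin d → ℝ) => p.2) γ := by
    refine Integrable.mono' (hint.add (integrable_const 1))
      measurable_snd.aestronglyMeasurable (ae_of_all _ fun p => ?_)
    simp only [Pi.add_apply]
    nlinarith [sq_nonneg (‖p.2‖ - 1), sq_nonneg ‖p.1‖, sq_nonneg ‖p.2‖]
  have hmean : ∀ᵐ x ∂γ.map Prod.fst,
      ∫ y, y ∂(ProbabilityTheory.condDistrib Prod.snd Prod.fst γ x) = x := by
    rw [ae_map_iff measurable_fst.aemeasurable]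
    · filter_upwards [hmart, ProbabilityTheory.condExp_ae_eq_integral_condDistrib'
        (measurable_fst : Measurable (Prod.fst : (Fin d → ℝ) × (Fin d → ℝ) → _)) hsnd]
        with p h1 h2
      rw [← h2, ← h1]
    · exact measurableSet_eq_fun
        (StronglyMeasurable.integral_kernel
          (f := fun y : Fin d → ℝ => y) stronglyMeasurable_id).measurable measurable_id
  have hintk := Integrable.condDistrib_ae_map (X := Prod.fst) (Y := Prod.snd) (μ := γ)
    (f := fun q : (Fin d → ℝ) × (Fin d → ℝ) => q.2) measurable_snd.aemeasurable
    (by simpa using hsnd)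
  filter_upwards [hmean, hintk] with x h1 h2 using ⟨h2, h1⟩

/-- Theorem 1, equivalence (b) ⇔ (c): for `γ ∈ Γ(ν)` and a maximal
`S`-monotone set `G`, the backward description (`x ∈ P_G(y)` on the support of `γ`) is
equivalent to the forward description (`x ∈ G` and `y ∈ Q_G(x)`, `γ`-a.s.). -/
theorem backward_iff_forward_evolution
    (d m : ℕ) (S : Matrix (Fin d) (Fin d) ℝ) (hS : S.IsHermitian)
    (hrank : IsUnit S.det)
    (hm : Nat.card {i : Fin d // 0 < hS.eigenvalues i} = m)
    (ν : Measure (Fin d → ℝ)) [IsProbabilityMeasure ν]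
    (hν : Integrable (fun y => ‖y‖ ^ 2) ν)
    (γ : Measure ((Fin d → ℝ) × (Fin d → ℝ))) (hγ : MGamma ν γ)
    (G : Set (Fin d → ℝ)) (hG : MaxSMono S G) :
    (∀ p ∈ msupp γ, p.1 ∈ SProj S G p.2) ↔
      (∀ᵐ p ∂γ, p.1 ∈ G ∧ p.2 ∈ QG S G p.1) := by
  have hprob : IsProbabilityMeasure γ := hγ.1
  have hGc := hG.isClosed
  have hP := isClosed_graph_SProj S hGc
  have hsupp : msupp γ = γ.support := by
    ext p
    simp [msupp, Measure.mem_support_iff_forall, pos_iff_ne_zero]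
  rw [hsupp]
  constructor
  · intro h
    have hae : ∀ᵐ p ∂γ, p.1 ∈ SProj S G p.2 := by
      filter_upwards [Measure.support_mem_ae (μ := γ)] with p hp using h p hp
    have hdis : (γ.map Prod.fst).compProd
        (ProbabilityTheory.condDistrib Prod.snd Prod.fst γ) = γ := by
      rw [ProbabilityTheory.compProd_map_condDistrib measurable_snd.aemeasurable]
      exact Measure.map_id
    rw [← hdis] at hae
    rw [← hdis]
    refine Measure.ae_compProd_of_ae_ae (measurableSet_graph_QG S hGc) ?_
    filter_upwards [Measure.ae_ae_of_ae_compProd hae, hγ.ae_condDistrib] with x hx hx'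
    have hcl : IsClosed (SProjInv S G x) :=
      hP.preimage (by fun_prop : Continuous fun y : Fin d → ℝ => (x, y))
    filter_upwards [hx, ae_exists_extend_of_barycenter _ (convex_SProjInv S G x) hcl hx
      hx'.1 hx'.2] with y hy hy'
    obtain ⟨n, hn⟩ := hy'
    exact ⟨hy.1, Set.mem_iUnion.2 ⟨n, hy, hn⟩⟩
  · intro h p hp
    refine Measure.support_subset_of_isClosed hP ?_ hp
    filter_upwards [h] with q hq
    obtain ⟨n, hn⟩ := Set.mem_iUnion.1 hq.2
    exact hn.1

end
end
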